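/- arXiv:math/0310496 — 3 statements merged into one kernel-verified Lean document; each statement's English description precedes it below -/
import Mathlib

section
/- For every positive natural number d divisible by 4, there exist a real polynomial P of degree d and a nonzero entire function w : ℂ → ℂ satisfying w''(z) + P(z)·w(z) = 0 for all z ∈ ℂ, such that the set of zeros of w is infinite and every zero of w is real. -/
open Complex Polynomial

namespace Brw
open MeasureTheory Metric Set

/-- `det (1 + t A)` is a polynomial in `t` of degree at most the dimension. -/
lemma det_poly {n : ℕ} (A : EuclideanSpace ℝ (Fin n) →L[ℝ] EuclideanSpace ℝ (Fin n)) :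
    ∃ q : ℝ[X], q.natDegree ≤ n ∧ ∀ t : ℝ, (1 + t • A).det = q.eval t := by
  let b := (EuclideanSpace.basisFun (Fin n) ℝ).toBasis
  let M := LinearMap.toMatrix b b (A : EuclideanSpace ℝ (Fin n) →ₗ[ℝ] EuclideanSpace ℝ (Fin n))
  refine ⟨Matrix.det ((X : ℝ[X]) • M.map C + (1 : Matrix (Fin n) (Fin n) ℝ).map C), ?_, ?_⟩
  · simpa using Polynomial.natDegree_det_X_add_C_le M 1
  · intro t
    have h1 : (1 + t • A).det = (LinearMap.toMatrix b b (((1 + t • A :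
        EuclideanSpace ℝ (Fin n) →L[ℝ] EuclideanSpace ℝ (Fin n))) :
        EuclideanSpace ℝ (Fin n) →ₗ[ℝ] EuclideanSpace ℝ (Fin n))).det := by
      rw [LinearMap.det_toMatrix]
    have h2 : LinearMap.toMatrix b b (((1 + t • A :
        EuclideanSpace ℝ (Fin n) →L[ℝ] EuclideanSpace ℝ (Fin n))) :
        EuclideanSpace ℝ (Fin n) →ₗ[ℝ] EuclideanSpace ℝ (Fin n)) = t • M + 1 := by
      have : (((1 + t • A :
        EuclideanSpace ℝ (Fin n) →L[ℝ] EuclideanSpace ℝ (Fin n))) :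
        EuclideanSpace ℝ (Fin n) →ₗ[ℝ] EuclideanSpace ℝ (Fin n)) = t • (A : _ →ₗ[ℝ] _) + LinearMap.id := by
        ext x i; simp [add_comm]
      rw [this, map_add, map_smul, LinearMap.toMatrix_id]
    rw [h1, h2, ← Polynomial.coe_evalRingHom, RingHom.map_det]
    congr 1
    ext i j
    by_cases hij : i = j
    · subst hij; simp; ring
    · simp [hij]; ring

lemma det_pos {n : ℕ} (A : EuclideanSpace ℝ (Fin n) →L[ℝ] EuclideanSpace ℝ (Fin n))
    (t : ℝ) (ht : 0 ≤ t) (h : t * ‖A‖ < 1) : 0 < (1 + t • A).det := by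
  obtain ⟨q, -, hq⟩ := det_poly A
  have hne : ∀ s ∈ Icc (0:ℝ) t, q.eval s ≠ 0 := by
    intro s hs h0
    have hu : IsUnit (1 - (-(s • A))) := by
      apply isUnit_one_sub_of_norm_lt_one
      rw [norm_neg, norm_smul, Real.norm_of_nonneg hs.1]
      exact lt_of_le_of_lt (mul_le_mul_of_nonneg_right hs.2 (norm_nonneg _)) h
    rw [sub_neg_eq_add] at hu
    rw [← hq] at h0
    obtain ⟨u, hu⟩ := hu
    have : (1 : EuclideanSpace ℝ (Fin n) →L[ℝ] EuclideanSpace ℝ (Fin n)).det = 0 := by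
      rw [← u.mul_inv, hu]
      have : ((1 + s • A) * ((u⁻¹ : _ˣ) : EuclideanSpace ℝ (Fin n) →L[ℝ] EuclideanSpace ℝ (Fin n))).det
        = (1 + s • A).det * ((u⁻¹ : _ˣ) : EuclideanSpace ℝ (Fin n) →L[ℝ] EuclideanSpace ℝ (Fin n)).det :=
        LinearMap.det_comp _ _
      rw [this, h0, zero_mul]
    have h1 : (1 : EuclideanSpace ℝ (Fin n) →L[ℝ] EuclideanSpace ℝ (Fin n)).det = 1 :=
      LinearMap.det_id
    rw [h1] at this; norm_num at this
  have h0 : q.eval 0 = 1 := by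
    have h00 := hq 0
    have e : (1 + (0:ℝ) • A) = 1 := by
      ext x i; simp
    rw [e] at h00
    rw [← h00]; exact LinearMap.det_id
  rw [hq]
  by_contra hc
  push Not at hc
  obtain ⟨s, hs, hs0⟩ := intermediate_value_Icc' ht (f := fun s => q.eval s) q.continuous.continuousOn
    (show (0:ℝ) ∈ Icc _ _ from ⟨hc, by rw [h0]; norm_num⟩)
  exact hne s hs hs0

/-- Perturbation of identity by a contraction vanishing off a ball is a bijection of the ball. -/
lemma image_ball {E : Type*} [NormedAddCommGroup E] [CompleteSpace E] (h : E → E)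
    (K : NNReal) (hK : K < 1) (hh : LipschitzWith K h) (r : ℝ) (h0 : ∀ x, r ≤ ‖x‖ → h x = 0) :
    Function.Injective (fun x => x + h x) ∧ (fun x => x + h x) '' (ball 0 r) = ball 0 r := by
  have inj : Function.Injective (fun x => x + h x) := by
    intro x y hxy
    simp only at hxy
    have h1 : x - y = h y - h x := by
      rw [sub_eq_sub_iff_add_eq_add, hxy, add_comm]
    have h2 : ‖x - y‖ ≤ K * ‖x - y‖ := by
      conv_lhs => rw [h1, ← dist_eq_norm]
      rw [← dist_eq_norm x y, dist_comm x y]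
      exact hh.dist_le_mul y x
    have : ‖x - y‖ = 0 := by
      have hK' : (K : ℝ) < 1 := by exact_mod_cast hK
      nlinarith [norm_nonneg (x - y)]
    exact sub_eq_zero.mp (norm_eq_zero.mp this)
  have surj : ∀ y, ∃ x, x + h x = y := by
    intro y
    have hc : ContractingWith K (fun x => y - h x) := by
      refine ⟨hK, ?_⟩
      intro a b
      have := hh b a
      simpa [edist_dist, dist_eq_norm, norm_sub_rev] using this
    exact ⟨hc.fixedPoint, by
      have := hc.fixedPoint_isFixedPt
      unfold Function.IsFixedPt at this
      simp only at this
      nth_rewrite 1 [← this]; abel⟩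
  refine ⟨inj, ?_⟩
  ext y
  simp only [mem_image, mem_ball_zero_iff]
  constructor
  · rintro ⟨x, hx, rfl⟩
    by_contra hc
    push Not at hc
    have h2 := h0 _ hc
    have := inj (a₁ := x + h x) (a₂ := x) (by simp only [h2, add_zero])
    rw [this] at hc; linarith
  · intro hy
    obtain ⟨x, hx⟩ := surj y
    refine ⟨x, ?_, hx⟩
    by_contra hc
    push Not at hc
    rw [h0 x hc, add_zero] at hx
    rw [hx] at hc; linarith

lemma integral_det {n : ℕ} (h : EuclideanSpace ℝ (Fin n) → EuclideanSpace ℝ (Fin n))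
    (h' : EuclideanSpace ℝ (Fin n) → EuclideanSpace ℝ (Fin n) →L[ℝ] EuclideanSpace ℝ (Fin n))
    (K : NNReal) (hh : LipschitzWith K h) (r : ℝ) (h0 : ∀ x, r ≤ ‖x‖ → h x = 0)
    (hd : ∀ x ∈ ball (0 : EuclideanSpace ℝ (Fin n)) r, HasFDerivAt h (h' x) x)
    (t : ℝ) (ht : 0 ≤ t) (htK : t * K < 1) :
    ∫ x in ball (0 : EuclideanSpace ℝ (Fin n)) r, (1 + t • h' x).det =
      volume.real (ball (0 : EuclideanSpace ℝ (Fin n)) r) := by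
  have hl : LipschitzWith (t.toNNReal * K) (fun x => t • h x) := by
    have := (lipschitzWith_smul t).comp hh
    have e : ‖t‖₊ = t.toNNReal := by
      ext; simp [ht]
    rw [e] at this
    exact this
  obtain ⟨inj, img⟩ := image_ball (fun x => t • h x) (t.toNNReal * K)
    (by rw [← NNReal.coe_lt_coe]; push_cast; rwa [Real.coe_toNNReal t ht]) hl r
    (fun x hx => by simp [h0 x hx])
  have hd' : ∀ x ∈ ball (0 : EuclideanSpace ℝ (Fin n)) r,
      HasFDerivWithinAt (fun x => x + t • h x) (1 + t • h' x) (ball 0 r) x := by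
    intro x hx
    exact ((hasFDerivAt_id x).add ((hd x hx).const_smul t)).hasFDerivWithinAt
  have key := integral_image_eq_integral_abs_det_fderiv_smul volume measurableSet_ball hd'
    inj.injOn (fun _ => (1:ℝ))
  rw [img] at key
  simp only [integral_const, smul_eq_mul, mul_one, MeasurableSet.univ, measureReal_restrict_apply,
    univ_inter] at key
  rw [key]
  apply setIntegral_congr_fun measurableSet_ball
  intro x hx
  simp only
  rw [abs_of_pos]
  apply det_pos _ _ ht
  refine lt_of_le_of_lt (mul_le_mul_of_nonneg_left ?_ ht) htK
  exact (hd x hx).le_of_lipschitz hh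

lemma integral_det_one {n : ℕ} (h : EuclideanSpace ℝ (Fin n) → EuclideanSpace ℝ (Fin n))
    (h' : EuclideanSpace ℝ (Fin n) → EuclideanSpace ℝ (Fin n) →L[ℝ] EuclideanSpace ℝ (Fin n))
    (K : NNReal) (hh : LipschitzWith K h) (r : ℝ) (h0 : ∀ x, r ≤ ‖x‖ → h x = 0)
    (hd : ∀ x ∈ ball (0 : EuclideanSpace ℝ (Fin n)) r, HasFDerivAt h (h' x) x)
    (hc : ContinuousOn h' (closedBall 0 r)) :
    ∫ x in ball (0 : EuclideanSpace ℝ (Fin n)) r, (1 + h' x).det =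
      volume.real (ball (0 : EuclideanSpace ℝ (Fin n)) r) := by
  let v : ℕ → ℝ := fun i => i / ((n + 1) * (K + 1))
  have hv : Set.InjOn v (Finset.range (n+1)) := by
    intro i _ j _ hij
    have hp : (((n:ℝ) + 1) * (K + 1)) ≠ 0 := by positivity
    simp only [v] at hij
    field_simp at hij
    exact_mod_cast hij
  let L : ℕ → ℝ := fun i => (Lagrange.basis (Finset.range (n+1)) v i).eval 1
  have hL : ∀ q : ℝ[X], q.natDegree ≤ n → q.eval 1 = ∑ i ∈ Finset.range (n+1), q.eval (v i) * L i := by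
    intro q hq
    have hdeg : q.degree < (Finset.range (n+1)).card := by
      rw [Finset.card_range]
      refine lt_of_le_of_lt Polynomial.degree_le_natDegree ?_
      exact_mod_cast Nat.lt_succ_of_le hq
    conv_lhs => rw [Lagrange.eq_interpolate hv hdeg]
    rw [Lagrange.interpolate_apply, Polynomial.eval_finsetSum]
    apply Finset.sum_congr rfl
    intro i _
    simp [L]
  have hpt : ∀ x, (1 + h' x).det = ∑ i ∈ Finset.range (n+1), (1 + v i • h' x).det * L i := by
    intro x
    obtain ⟨q, hq, hqe⟩ := det_poly (h' x)
    have := hqe 1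
    rw [one_smul] at this
    rw [this, hL q hq]
    simp_rw [hqe]
  simp_rw [hpt]
  rw [integral_finsetSum]
  · have hb : ∀ i ∈ Finset.range (n+1),
        ∫ x in ball (0 : EuclideanSpace ℝ (Fin n)) r, (1 + v i • h' x).det * L i =
        volume.real (ball (0 : EuclideanSpace ℝ (Fin n)) r) * L i := by
      intro i hi
      rw [integral_mul_const, integral_det h h' K hh r h0 hd (v i) (by positivity)]
      have hi' : (i:ℝ) < n + 1 := by exact_mod_cast Finset.mem_range.mp hi
      have hp : 0 < (((n:ℝ) + 1) * (K + 1)) := by positivity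
      simp only [v]
      rw [div_mul_eq_mul_div, div_lt_one hp]
      have hK : (0:ℝ) ≤ K := K.2
      nlinarith [mul_nonneg (Nat.cast_nonneg (α := ℝ) i) hK]
    rw [Finset.sum_congr rfl hb]
    have := hL (C (volume.real (ball (0 : EuclideanSpace ℝ (Fin n)) r))) (by simp)
    simpa using this.symm
  · intro i _
    have : IntegrableOn (fun x => (1 + v i • h' x).det * L i)
      (closedBall (0 : EuclideanSpace ℝ (Fin n)) r) := by
      apply ContinuousOn.integrableOn_compact (isCompact_closedBall _ _)
      apply ContinuousOn.mul _ continuousOn_const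
      exact ContinuousLinearMap.continuous_det.comp_continuousOn
        (continuousOn_const.add (hc.const_smul (v i)))
    exact this.mono_set ball_subset_closedBall


lemma no_map {n : ℕ} (F : EuclideanSpace ℝ (Fin n) → EuclideanSpace ℝ (Fin n))
    (hF : ContDiff ℝ 1 F) (r : ℝ) (hr : 0 < r) (hid : ∀ x, ‖x‖ = r → F x = x)
    (hne : ∀ x, ‖x‖ ≤ r → F x ≠ 0) : False := by
  let G : EuclideanSpace ℝ (Fin n) → EuclideanSpace ℝ (Fin n) := fun x => (r * ‖F x‖⁻¹) • F x
  let U : Set (EuclideanSpace ℝ (Fin n)) := {x | F x ≠ 0}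
  have hU : IsOpen U := isOpen_ne_fun hF.continuous continuous_const
  have hBU : closedBall 0 r ⊆ U := fun x hx => hne x (by simpa using hx)
  have hG : ContDiffOn ℝ 1 G U := by
    intro x hx
    apply ContDiffAt.contDiffWithinAt
    have h1 : ContDiffAt ℝ 1 F x := hF.contDiffAt
    exact (contDiffAt_const.mul ((h1.norm ℝ hx).inv (norm_ne_zero_iff.mpr hx))).smul h1
  have hGn : ∀ x ∈ U, ‖G x‖ = r := by
    intro x hx
    have : ‖F x‖ ≠ 0 := norm_ne_zero_iff.mpr hx
    simp only [G, norm_smul, norm_mul, norm_inv, norm_norm, Real.norm_of_nonneg hr.le]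
    field_simp
  have hGid : ∀ x, ‖x‖ = r → G x = x := by
    intro x hx
    simp only [G, hid x hx, hx, mul_inv_cancel₀ hr.ne', one_smul]
  let H : EuclideanSpace ℝ (Fin n) → EuclideanSpace ℝ (Fin n) := fun x => G x - x
  have hH : ContDiffOn ℝ 1 H U := hG.sub contDiff_id.contDiffOn
  have hcont : ContinuousOn (fderiv ℝ H) U := hH.continuousOn_fderiv_of_isOpen hU le_rfl
  have hdH : ∀ x ∈ U, DifferentiableAt ℝ H x := fun x hx =>
    (hH.differentiableOn one_ne_zero).differentiableAt (hU.mem_nhds hx)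
  obtain ⟨K, hK⟩ : ∃ K : NNReal, LipschitzOnWith K H (closedBall 0 r) := by
    obtain ⟨B, hB⟩ := (isCompact_closedBall (0 : EuclideanSpace ℝ (Fin n)) r).exists_bound_of_continuousOn
      (hcont.mono hBU)
    refine ⟨B.toNNReal, ?_⟩
    apply Convex.lipschitzOnWith_of_nnnorm_fderiv_le (𝕜 := ℝ) (fun x hx => hdH x (hBU hx)) _
      (convex_closedBall _ _)
    intro x hx
    rw [← NNReal.coe_le_coe]
    exact le_trans (hB x hx) (Real.le_coe_toNNReal B)
  have hH0 : ∀ x, ‖x‖ = r → H x = 0 := fun x hx => by simp only [H, hGid x hx, sub_self]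
  classical
  let h : EuclideanSpace ℝ (Fin n) → EuclideanSpace ℝ (Fin n) := fun x => if ‖x‖ < r then H x else 0
  have hin : ∀ x, ‖x‖ ≤ r → h x = H x := by
    intro x hx
    rcases hx.lt_or_eq with h1 | h1
    · simp only [h, h1, if_true]
    · simp only [h, h1, lt_irrefl, if_false, hH0 x h1]
  have hout : ∀ x, r ≤ ‖x‖ → h x = 0 := fun x hx => by simp only [h, not_lt.mpr hx, if_false]
  have hcross : ∀ x y, ‖x‖ ≤ r → r ≤ ‖y‖ → dist (h x) (h y) ≤ K * dist x y := by
    intro x y hx hy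
    have hc : ContinuousOn (fun s : ℝ => ‖AffineMap.lineMap x y s‖) (Icc 0 1) := by
      apply Continuous.continuousOn
      apply Continuous.norm
      exact AffineMap.lineMap_continuous
    obtain ⟨s, hs, hs'⟩ := intermediate_value_Icc zero_le_one hc
      (show r ∈ Icc _ _ by simpa using ⟨hx, hy⟩)
    simp only at hs'
    set z := AffineMap.lineMap x y s with hz
    rw [hout y hy, ← hout z hs'.ge, hin x hx, hin z hs'.le]
    refine (hK.dist_le_mul x (by simpa using hx) z (by simpa using hs'.le)).trans ?_
    apply mul_le_mul_of_nonneg_left _ K.2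
    rw [hz, dist_left_lineMap, Real.norm_of_nonneg hs.1]
    have := dist_nonneg (x := x) (y := y)
    nlinarith [hs.2]
  have hLip : LipschitzWith K h := by
    apply LipschitzWith.of_dist_le_mul
    intro x y
    rcases le_total ‖x‖ r with hx | hx <;> rcases le_total ‖y‖ r with hy | hy
    · rw [hin x hx, hin y hy]
      exact hK.dist_le_mul x (by simpa using hx) y (by simpa using hy)
    · exact hcross x y hx hy
    · rw [dist_comm, dist_comm x]; exact hcross y x hy hx
    · rw [hout x hx, hout y hy, dist_self]; positivity
  have hder : ∀ x ∈ ball (0 : EuclideanSpace ℝ (Fin n)) r, HasFDerivAt h (fderiv ℝ H x) x := by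
    intro x hx
    apply (hdH x (hBU (ball_subset_closedBall hx))).hasFDerivAt.congr_of_eventuallyEq
    filter_upwards [isOpen_ball.mem_nhds hx] with y hy
    exact hin y (by simpa using (mem_ball_zero_iff.mp hy).le)
  have key := integral_det_one h (fderiv ℝ H) K hLip r hout hder (hcont.mono hBU)
  have hz : ∀ x ∈ ball (0 : EuclideanSpace ℝ (Fin n)) r, (1 + fderiv ℝ H x).det = 0 := by
    intro x hx
    have hxU := hBU (ball_subset_closedBall hx)
    have hGd : HasFDerivAt G (1 + fderiv ℝ H x) x := by
      have := (hasFDerivAt_id x).add (hdH x hxU).hasFDerivAt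
      refine this.congr_of_eventuallyEq (Filter.Eventually.of_forall fun y => ?_)
      simp [H]
    have hin2 : ∀ v, inner ℝ (G x) ((1 + fderiv ℝ H x) v) = 0 := by
      intro v
      have h1 := (hGd.inner ℝ hGd)
      have h2 : HasFDerivAt (fun y => inner ℝ (G y) (G y)) (0 : EuclideanSpace ℝ (Fin n) →L[ℝ] ℝ) x := by
        refine (hasFDerivAt_const (r^2) x).congr_of_eventuallyEq ?_
        filter_upwards [hU.mem_nhds hxU] with y hy
        rw [real_inner_self_eq_norm_sq, hGn y hy]
      have h3 := congrArg (fun T => T v) (h1.unique h2)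
      simp [fderivInnerCLM_apply] at h3
      rw [real_inner_comm (G x)] at h3
      simp
      linarith
    by_contra hdet
    have hs : Function.Surjective (fun v => (1 + fderiv ℝ H x : EuclideanSpace ℝ (Fin n) →L[ℝ] EuclideanSpace ℝ (Fin n)) v) := by
      have hu : IsUnit (LinearMap.det ((1 + fderiv ℝ H x : EuclideanSpace ℝ (Fin n) →L[ℝ] EuclideanSpace ℝ (Fin n)) : EuclideanSpace ℝ (Fin n) →ₗ[ℝ] EuclideanSpace ℝ (Fin n))) := isUnit_iff_ne_zero.mpr hdet
      have := ((Module.End.isUnit_iff _).mp ((LinearMap.isUnit_iff_isUnit_det _).mpr hu)).2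
      exact this
    obtain ⟨v, hv⟩ := hs (G x)
    have h4 := hin2 v
    simp only at hv
    rw [hv, real_inner_self_eq_norm_sq, hGn x hxU] at h4
    exact absurd h4 (by positivity)
  rw [setIntegral_congr_fun measurableSet_ball hz, integral_zero] at key
  have : 0 < volume.real (ball (0 : EuclideanSpace ℝ (Fin n)) r) :=
    ENNReal.toReal_pos (measure_ball_pos _ _ hr).ne' measure_ball_lt_top.ne
  linarith

open scoped Manifold ContDiff in
theorem fixed {n : ℕ} (c : EuclideanSpace ℝ (Fin n) → EuclideanSpace ℝ (Fin n))
    (hc : Continuous c) (B : ℝ) (hB : ∀ x, ‖c x‖ ≤ B) : ∃ x, c x = x := by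
  by_contra hno
  push Not at hno
  have hB0 : 0 ≤ B := (norm_nonneg _).trans (hB 0)
  set R := B + 1 with hR
  obtain ⟨ε, hε, hεx⟩ : ∃ ε > 0, ∀ x : EuclideanSpace ℝ (Fin n), ‖x‖ ≤ R → ε ≤ ‖x - c x‖ := by
    obtain ⟨x0, -, hx0⟩ := (isCompact_closedBall (0 : EuclideanSpace ℝ (Fin n)) R).exists_isMinOn
      ⟨0, by simp; linarith⟩ (continuous_id.sub hc).norm.continuousOn
    refine ⟨‖x0 - c x0‖, norm_pos_iff.mpr (sub_ne_zero.mpr (hno x0).symm), fun x hx => ?_⟩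
    exact hx0 (by simpa using hx)
  set δ := min ε 1 with hδ
  have hδ0 : 0 < δ := lt_min hε one_pos
  obtain ⟨g, hg⟩ := exists_contMDiffMap_forall_mem_convex_of_local_const
    𝓘(ℝ, EuclideanSpace ℝ (Fin n)) (n := 1) (t := fun x => ball (c x) δ)
    (fun x => convex_ball _ _) (fun x => ⟨c x, by
      filter_upwards [hc.continuousAt.preimage_mem_nhds (ball_mem_nhds (c x) hδ0)] with y hy
      rw [mem_ball, dist_comm]; exact hy⟩)
  have hgs : ContDiff ℝ 1 g := g.contMDiff.contDiff
  have hgn : ∀ x, ‖g x - c x‖ < δ := fun x => by simpa [dist_eq_norm] using hg x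
  have hgR : ∀ x, ‖g x‖ < R := by
    intro x
    calc ‖g x‖ = ‖(g x - c x) + c x‖ := by simp
      _ ≤ ‖g x - c x‖ + ‖c x‖ := norm_add_le _ _
      _ < 1 + B := add_lt_add_of_lt_of_le ((hgn x).trans_le (min_le_right _ _)) (hB x)
      _ = R := by rw [hR, add_comm]
  have hRpos : 0 < R := by linarith
  let χ : ContDiffBump (0 : EuclideanSpace ℝ (Fin n)) := ⟨R, 2 * R, hRpos, by linarith⟩
  refine no_map (fun x => x - χ x • g x) ?_ (2 * R) (by linarith) ?_ ?_
  · exact contDiff_id.sub (χ.contDiff.smul hgs)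
  · intro x hx
    have : χ x = 0 := χ.zero_of_le_dist (by simp [χ, hx])
    simp [this]
  · intro x hx h0
    rw [sub_eq_zero] at h0
    rcases le_or_gt ‖x‖ R with h1 | h1
    · have : χ x = 1 := χ.one_of_mem_closedBall (by simpa [χ] using h1)
      rw [this, one_smul] at h0
      have h2 := hεx x h1
      have h3 : ‖x - c x‖ < δ := by
        have := hgn x
        rwa [← h0] at this
      have := min_le_left ε 1
      linarith
    · have h2 : ‖x‖ ≤ ‖g x‖ := by
        conv_lhs => rw [h0, norm_smul, Real.norm_of_nonneg χ.nonneg]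
        have := χ.le_one (x := x)
        nlinarith [norm_nonneg (g x), χ.nonneg (x := x)]
      linarith [hgR x]

/-- Poincaré–Miranda. -/
theorem miranda {n : ℕ} (lo hi : Fin n → ℝ) (hlh : ∀ i, lo i ≤ hi i) (S : (Fin n → ℝ) → Fin n → ℝ)
    (hS : ContinuousOn S (Icc lo hi))
    (hlo : ∀ x ∈ Icc lo hi, ∀ i, x i = lo i → 0 < S x i)
    (hhi : ∀ x ∈ Icc lo hi, ∀ i, x i = hi i → S x i < 0) :
    ∃ x ∈ Icc lo hi, S x = 0 := by
  let cl : (Fin n → ℝ) → (Fin n → ℝ) := fun x i => max (lo i) (min (hi i) (x i))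
  have hcl : ∀ x, cl x ∈ Icc lo hi := fun x =>
    ⟨fun i => le_max_left _ _, fun i => max_le (hlh i) (min_le_left _ _)⟩
  have hclc : Continuous cl := by fun_prop
  have hScl : Continuous (fun x => S (cl x)) := hS.comp_continuous hclc hcl
  let c : EuclideanSpace ℝ (Fin n) → EuclideanSpace ℝ (Fin n) :=
    fun x => WithLp.toLp 2 (cl (fun i => cl (WithLp.ofLp x) i + S (cl (WithLp.ofLp x)) i))
  have hcc : Continuous c := by
    apply (PiLp.continuous_toLp 2 _).comp
    apply hclc.comp
    have h1 : Continuous (fun x : EuclideanSpace ℝ (Fin n) => WithLp.ofLp x) := PiLp.continuous_ofLp 2 _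
    have h2 := hclc.comp h1
    have h3 := hScl.comp h1
    exact h2.add h3
  obtain ⟨B, hB⟩ : ∃ B, ∀ x, ‖c x‖ ≤ B := by
    obtain ⟨B, hB⟩ := ((isCompact_Icc (a := lo) (b := hi)).image (PiLp.continuous_toLp 2 _)).isBounded.exists_norm_le
    exact ⟨B, fun x => hB _ ⟨_, hcl _, rfl⟩⟩
  obtain ⟨x, hx⟩ := fixed c hcc B hB
  set y := WithLp.ofLp x with hy
  have hxy : y = cl (fun i => cl y i + S (cl y) i) := by
    have := congrArg WithLp.ofLp hx
    simpa [c] using this.symm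
  have hyI : y ∈ Icc lo hi := by rw [hxy]; exact hcl _
  have hcy : cl y = y := by
    ext i
    simp only [cl]
    rw [min_eq_right (hyI.2 i), max_eq_right (hyI.1 i)]
  rw [hcy] at hxy
  refine ⟨y, hyI, ?_⟩
  ext i
  have hi' := congrFun hxy i
  simp only [cl] at hi'
  simp only [Pi.zero_apply]
  rcases lt_trichotomy (S y i) 0 with h | h | h
  · exfalso
    have : y i = lo i := by
      rcases max_choice (lo i) (min (hi i) (y i + S y i)) with h1 | h1
      · rw [hi', h1]
      · have := min_le_right (hi i) (y i + S y i)
        rw [h1] at hi'; linarith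
    linarith [hlo y hyI i this]
  · exact h
  · exfalso
    have : y i = hi i := by
      rcases min_choice (hi i) (y i + S y i) with h1 | h1
      · rw [hi', h1, max_eq_right (hlh i)]
      · have := le_max_right (lo i) (min (hi i) (y i + S y i))
        rw [h1] at this hi'; linarith
    linarith [hhi y hyI i this]

end Brw


namespace Pts
open Finset

/-- partial sums of gaps -/
noncomputable def tt {n : ℕ} (g : Fin n → ℝ) (i : Fin n) : ℝ := ∑ j ∈ Iic i, g j

lemma tt_add_le {n : ℕ} {g : Fin n → ℝ} (hg : ∀ i, 0 ≤ g i) {j r i : Fin n} (hj : j < r) (hr : r ≤ i) :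
    tt g j + g r ≤ tt g i := by
  have : tt g j + g r = ∑ l ∈ insert r (Iic j), g l := by
    rw [sum_insert (by simpa using hj), add_comm, tt]
  rw [this]
  apply sum_le_sum_of_subset_of_nonneg
  · intro l hl
    simp only [mem_insert, mem_Iic] at hl ⊢
    rcases hl with rfl | hl
    · exact hr
    · exact hl.trans (hj.le.trans hr)
  · intro l _ _; exact hg l

lemma le_tt {n : ℕ} {g : Fin n → ℝ} (hg : ∀ i, 0 ≤ g i) {r i : Fin n} (hr : r ≤ i) :
    g r ≤ tt g i :=
  single_le_sum (f := g) (fun l _ => hg l) (by simpa using hr)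

lemma tt_pred {n : ℕ} (g : Fin n → ℝ) {j r : Fin n} (h : j.val + 1 = r.val) :
    tt g r = tt g j + g r := by
  have : Iic r = insert r (Iic j) := by
    ext l; simp only [mem_insert, mem_Iic, Fin.le_def, Fin.ext_iff]; omega
  have hnm : r ∉ Iic j := by simp only [mem_Iic, Fin.le_def]; omega
  rw [tt, this, sum_insert hnm, add_comm, tt]

noncomputable def mm {n : ℕ} (k : ℕ) (g : Fin n → ℝ) (i : Fin n) : ℝ := (tt g i ^ k)⁻¹

noncomputable def SS {n : ℕ} (k : ℕ) (κ : ℝ) (g : Fin n → ℝ) (r : Fin n) : ℝ :=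
  ∑ i ∈ Ici r, mm k g i * (∑ j ∈ Iio r, mm k g j / (tt g i - tt g j) + κ * mm k g i / tt g i - 1)

lemma tt_pos {n : ℕ} {g : Fin n → ℝ} (hg : ∀ i, 0 < g i) (i : Fin n) : 0 < tt g i :=
  (hg i).trans_le (le_tt (fun l => (hg l).le) le_rfl)

lemma mm_pos {n : ℕ} {k : ℕ} {g : Fin n → ℝ} (hg : ∀ i, 0 < g i) (i : Fin n) : 0 < mm k g i :=
  inv_pos.mpr (pow_pos (tt_pos hg i) k)

lemma tt_lt {n : ℕ} {g : Fin n → ℝ} (hg : ∀ i, 0 < g i) {j i : Fin n} (h : j < i) :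
    tt g j < tt g i := by
  have := tt_add_le (fun l => (hg l).le) h le_rfl
  linarith [hg i]

lemma SS_pos {n k : ℕ} {κ : ℝ} (hκ : 1 ≤ κ) {g : Fin n → ℝ} (hg : ∀ i, 0 < g i) (r : Fin n)
    (h : (n : ℝ) < ∑ j ∈ Iio r, mm k g j / (tt g r - tt g j) + κ * mm k g r / tt g r) :
    0 < SS k κ g r := by
  have e1 : SS k κ g r = ∑ i ∈ Ici r, mm k g i * (∑ j ∈ Iio r, mm k g j / (tt g i - tt g j) + κ * mm k g i / tt g i) - ∑ i ∈ Ici r, mm k g i := by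
    rw [SS, ← sum_sub_distrib]
    apply sum_congr rfl; intro i _; ring
  rw [e1, sub_pos]
  calc ∑ i ∈ Ici r, mm k g i ≤ ∑ i ∈ Ici r, mm k g r := by
        apply sum_le_sum
        intro i hi
        have hi' : r ≤ i := by simpa using hi
        apply inv_anti₀ (pow_pos (tt_pos hg r) k)
        apply pow_le_pow_left₀ (tt_pos hg r).le
        rcases hi'.eq_or_lt with h | h
        · rw [h]
        · exact (tt_lt hg h).le
    _ = (Ici r).card * mm k g r := by simp
    _ ≤ n * mm k g r := by
        apply mul_le_mul_of_nonneg_right _ (mm_pos hg r).le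
        exact_mod_cast (card_le_univ _).trans (by simp)
    _ < mm k g r * (∑ j ∈ Iio r, mm k g j / (tt g r - tt g j) + κ * mm k g r / tt g r) := by
        rw [mul_comm]; exact mul_lt_mul_of_pos_left h (mm_pos hg r)
    _ ≤ _ := by
        refine single_le_sum (f := fun i => mm k g i * (∑ j ∈ Iio r, mm k g j / (tt g i - tt g j) + κ * mm k g i / tt g i)) ?_ (by simp : r ∈ Ici r)
        intro i hi
        have hi' : r ≤ i := by simpa using hi
        apply mul_nonneg (mm_pos hg i).le
        apply add_nonneg
        · apply sum_nonneg
          intro j hj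
          have hj' : j < r := by simpa using hj
          exact div_nonneg (mm_pos hg j).le (sub_nonneg.mpr (tt_lt hg (hj'.trans_le hi')).le)
        · have := mm_pos (k := k) hg i
          have := tt_pos hg i
          positivity

lemma SS_neg {n k : ℕ} {κ : ℝ} (hκ : 1 ≤ κ) {g : Fin n → ℝ} (hg : ∀ i, 0 < g i) (r : Fin n)
    (C H : ℝ) (hC : ∀ j, mm k g j ≤ C) (hH : (n + κ) * C < H) (hr : g r = H) :
    SS k κ g r < 0 := by
  have hC0 : 0 < C := (mm_pos hg r).trans_le (hC r)
  have hH0 : 0 < H := hr ▸ hg r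
  apply sum_neg _ ⟨r, by simp⟩
  intro i hi
  have hi' : r ≤ i := by simpa using hi
  apply mul_neg_of_pos_of_neg (mm_pos hg i)
  have h1 : ∑ j ∈ Iio r, mm k g j / (tt g i - tt g j) ≤ n * (C / H) := by
    calc _ ≤ ∑ j ∈ Iio r, C / H := by
          apply sum_le_sum
          intro j hj
          have hj' : j < r := by simpa using hj
          have := tt_add_le (fun l => (hg l).le) hj' hi'
          apply div_le_div₀ hC0.le (hC j) hH0
          linarith
      _ = (Iio r).card * (C / H) := by simp
      _ ≤ _ := by
        apply mul_le_mul_of_nonneg_right _ (by positivity)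
        exact_mod_cast (card_le_univ _).trans (by simp)
  have h2 : κ * mm k g i / tt g i ≤ κ * C / H := by
    apply div_le_div₀ (by positivity) _ hH0
    · rw [← hr]; exact le_tt (fun l => (hg l).le) hi'
    · exact mul_le_mul_of_nonneg_left (hC i) (by linarith)
  have h3 : n * (C / H) + κ * C / H < 1 := by
    have : n * (C / H) + κ * C / H = (n + κ) * C / H := by ring
    rw [this, div_lt_one hH0]; exact hH
  linarith

lemma antisym {ι : Type*} (A : Finset ι) (m t : ι → ℝ) :
    ∑ i ∈ A, ∑ j ∈ A, m i * (m j / (t i - t j)) = 0 := by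
  have : ∑ i ∈ A, ∑ j ∈ A, m i * (m j / (t i - t j)) = - ∑ i ∈ A, ∑ j ∈ A, m i * (m j / (t i - t j)) := by
    conv_lhs => rw [sum_comm]
    rw [← sum_neg_distrib]
    apply sum_congr rfl; intro i _
    rw [← sum_neg_distrib]
    apply sum_congr rfl; intro j _
    rw [← neg_sub (t i) (t j), div_neg]; ring
  linarith

lemma SS_eq {n k : ℕ} {κ : ℝ} {g : Fin n → ℝ} (r : Fin n) :
    SS k κ g r = ∑ i ∈ Ici r, mm k g i * (∑ j, mm k g j / (tt g i - tt g j) + κ * mm k g i / tt g i - 1) := by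
  have e : ∀ i, ∑ j, mm k g j / (tt g i - tt g j) = ∑ j ∈ Iio r, mm k g j / (tt g i - tt g j) + ∑ j ∈ Ici r, mm k g j / (tt g i - tt g j) := by
    intro i
    rw [← sum_union]
    · congr 1
      ext l; simp [lt_or_ge]
    · rw [Finset.disjoint_left]; intro l; simp
  have h := antisym (Ici r) (mm k g) (tt g)
  simp only [← mul_sum] at h
  rw [SS, ← add_zero (∑ i ∈ Ici r, _), ← h, ← sum_add_distrib]
  apply sum_congr rfl
  intro i _
  rw [e]; ring

theorem exists_pts (n k : ℕ) (κ : ℝ) (hκ : 1 ≤ κ) :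
    ∃ t : Fin n → ℝ, (∀ i, 0 < t i) ∧ Function.Injective t ∧
      ∀ i, ∑ j, (t j ^ k)⁻¹ / (t i - t j) + κ * (t i ^ k)⁻¹ / t i = 1 := by
  set ε : ℝ := 1 / (n + 1) with hε
  set C : ℝ := (n + 1) ^ k with hC
  set H : ℝ := (n + κ + 1) * C with hH
  set D : ℝ := ((n + 1) * H) ^ k with hD
  set δ : ℝ := D⁻¹ / (n + 1) with hδ
  have hn0 : (0 : ℝ) ≤ n := n.cast_nonneg
  have hC1 : 1 ≤ C := one_le_pow₀ (by linarith)
  have hH1 : 1 ≤ H := by nlinarith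
  have hD1 : 1 ≤ D := one_le_pow₀ (by nlinarith)
  have hε0 : 0 < ε := by positivity
  have hε1 : ε ≤ 1 := by rw [hε, div_le_one (by positivity)]; linarith
  have hδ0 : 0 < δ := by positivity
  have hδ1 : δ ≤ 1 := by
    rw [hδ, div_le_one (by positivity)]
    have : D⁻¹ ≤ 1 := inv_le_one_of_one_le₀ hD1
    linarith
  let lo : Fin n → ℝ := fun r => if r.val = 0 then ε else δ
  let hi : Fin n → ℝ := fun _ => H
  have hlo0 : ∀ r, 0 < lo r := fun r => by simp only [lo]; split_ifs <;> assumption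
  have hlh : ∀ r, lo r ≤ hi r := fun r => by simp only [lo, hi]; split_ifs <;> linarith
  have hpos : ∀ g ∈ Set.Icc lo hi, ∀ i, 0 < g i := fun g hg i => (hlo0 i).trans_le (hg.1 i)
  have hcont : ContinuousOn (SS (n := n) k κ) (Set.Icc lo hi) := by
    have ct : ∀ i : Fin n, Continuous (fun g : Fin n → ℝ => tt g i) := fun i => by
      unfold tt; fun_prop
    have cm : ∀ i : Fin n, ContinuousOn (fun g : Fin n → ℝ => mm k g i) (Set.Icc lo hi) := fun i => by
      unfold mm
      exact ((ct i).pow k).continuousOn.inv₀ (fun g hg => (pow_pos (tt_pos (hpos g hg) i) k).ne')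
    apply continuousOn_pi.mpr
    intro r
    unfold SS
    apply continuousOn_finsetSum
    intro i hi
    have hi' : r ≤ i := by simpa using hi
    apply (cm i).mul
    apply ContinuousOn.sub _ continuousOn_const
    apply ContinuousOn.add
    · apply continuousOn_finsetSum
      intro j hj
      have hj' : j < r := by simpa using hj
      apply (cm j).div ((ct i).sub (ct j)).continuousOn
      intro g hg
      exact (sub_pos.mpr (tt_lt (hpos g hg) (hj'.trans_le hi'))).ne'
    · apply (continuousOn_const.mul (cm i)).div (ct i).continuousOn
      intro g hg
      exact (tt_pos (hpos g hg) i).ne'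
  obtain ⟨g, hg, hg0⟩ := Brw.miranda lo hi hlh (SS k κ) hcont
    (by
      intro g hg r hr
      have hp := hpos g hg
      apply SS_pos hκ hp
      have hmr := mm_pos (k := k) hp r
      have htr := tt_pos hp r
      by_cases h0 : r.val = 0
      · have e0 : tt g r = ε := by
          have : Iic r = {r} := by ext l; simp [Fin.le_def, Fin.ext_iff, h0]
          rw [tt, this, sum_singleton, hr]; simp [lo, h0]
        have e1 : Iio r = ∅ := by ext l; simp [Fin.lt_def, h0]
        rw [e1, sum_empty, zero_add, mm, e0, hε]
        have : κ * ((1 / ((n : ℝ) + 1)) ^ k)⁻¹ / (1 / ((n : ℝ) + 1)) = κ * C * (n + 1) := by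
          rw [hC]; simp
        rw [this]
        have : 1 ≤ κ * C := by nlinarith
        nlinarith
      · have hgr : g r = δ := by rw [hr]; simp [lo, h0]
        let j : Fin n := ⟨r.val - 1, by omega⟩
        have hj : j.val + 1 = r.val := by simp [j]; omega
        have hjr : j < r := by rw [Fin.lt_def]; omega
        have hm : D⁻¹ ≤ mm k g j := by
          rw [mm]
          apply inv_anti₀ (pow_pos (tt_pos hp j) k)
          rw [hD]
          apply pow_le_pow_left₀ (tt_pos hp j).le
          calc tt g j ≤ ∑ l ∈ Iic j, H := sum_le_sum (fun l _ => hg.2 l)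
            _ = (Iic j).card * H := by simp
            _ ≤ (n + 1) * H := by
              apply mul_le_mul_of_nonneg_right _ (by linarith)
              have : ((Iic j).card : ℝ) ≤ n := by exact_mod_cast (card_le_univ _).trans (by simp)
              linarith
        calc (n : ℝ) < n + 1 := by linarith
          _ = D⁻¹ / δ := by rw [hδ]; field_simp
          _ ≤ mm k g j / δ := by gcongr
          _ = mm k g j / (tt g r - tt g j) := by rw [tt_pred g hj, hgr]; simp
          _ ≤ ∑ j ∈ Iio r, mm k g j / (tt g r - tt g j) := by
            apply single_le_sum (f := fun j => mm k g j / (tt g r - tt g j)) _ (by simpa using hjr)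
            intro l hl
            have hl' : l < r := by simpa using hl
            exact div_nonneg (mm_pos hp l).le (sub_nonneg.mpr (tt_lt hp hl').le)
          _ ≤ _ := by
            have : 0 ≤ κ * mm k g r / tt g r := by positivity
            linarith)
    (by
      intro g hg r hr
      have hp := hpos g hg
      refine SS_neg hκ hp r C H ?_ (by rw [hH]; nlinarith) hr
      intro j
      have hn : 0 < n := j.pos
      have h1 : ε ≤ tt g j := by
        have h2 := le_tt (fun l => (hp l).le) (show (⟨0, hn⟩ : Fin n) ≤ j by simp [Fin.le_def])
        have h3 := hg.1 ⟨0, hn⟩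
        simp [lo] at h3
        linarith
      rw [mm]
      have : C = (ε ^ k)⁻¹ := by rw [hC, hε]; simp
      rw [this]
      exact inv_anti₀ (by positivity) (pow_le_pow_left₀ hε0.le h1 k))
  have hp := hpos g hg
  refine ⟨tt g, tt_pos hp, ?_, ?_⟩
  · intro a b hab
    rcases lt_trichotomy a b with h | h | h
    · have := tt_lt hp h; linarith
    · exact h
    · have := tt_lt hp h; linarith
  · have key : ∀ i, ∑ j, mm k g j / (tt g i - tt g j) + κ * mm k g i / tt g i - 1 = 0 := by
      intro r
      induction r using WellFoundedGT.induction with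
      | ind r ih =>
        have h1 := congrFun hg0 r
        rw [SS_eq] at h1
        have h2 : Ici r = insert r (Ioi r) := by ext l; simp [le_iff_eq_or_lt]
        rw [h2, sum_insert (by simp), sum_eq_zero (s := Ioi r), add_zero] at h1
        · exact (mul_eq_zero.mp h1).resolve_left (mm_pos hp r).ne'
        · intro i hi
          rw [ih i (by simpa using hi), mul_zero]
    intro i
    have := key i
    simp only [mm] at this
    linarith

end Pts


namespace Pts
open Finset

lemma sq_identity {F : Type*} [Field F] {n : ℕ} (m T : Fin n → F) (κ θ u : F) (hT : Function.Injective T)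
    (hu : ∀ i, u ≠ T i) (heq : ∀ i, ∑ j, m j / (T i - T j) + κ * m i / T i = θ) :
    (∑ j, m j / (u - T j) - θ) ^ 2
      = ∑ i, (m i ^ 2 / (u - T i) ^ 2 - 2 * κ * (m i ^ 2 / (T i * (u - T i)))) + θ ^ 2 := by
  have h1 : ∀ i j, m i / (u - T i) * (m j / (u - T j)) =
      (if i = j then m i ^ 2 / (u - T i) ^ 2 else 0) +
        (m i / (u - T i) * (m j / (T i - T j)) + m j / (u - T j) * (m i / (T j - T i))) := by
    intro i j
    have hi := sub_ne_zero.mpr (hu i)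
    have hj := sub_ne_zero.mpr (hu j)
    by_cases hij : i = j
    · subst hij; simp; field_simp
    · have h2 : T i - T j ≠ 0 := sub_ne_zero.mpr (fun h => hij (hT h))
      have h3 : T j - T i = -(T i - T j) := by ring
      rw [if_neg hij, h3, div_neg]
      field_simp
      ring
  have h2 : (∑ j, m j / (u - T j)) ^ 2 = ∑ i, m i ^ 2 / (u - T i) ^ 2 +
      2 * ∑ i, m i / (u - T i) * (θ - κ * m i / T i) := by
    rw [sq, sum_mul_sum]
    simp_rw [h1, sum_add_distrib]
    have h3 : ∑ i, ∑ j, m j / (u - T j) * (m i / (T j - T i)) = ∑ i, ∑ j, m i / (u - T i) * (m j / (T i - T j)) := sum_comm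
    rw [h3]
    have h4 : ∑ i, ∑ j, m i / (u - T i) * (m j / (T i - T j)) = ∑ i, m i / (u - T i) * (θ - κ * m i / T i) := by
      apply sum_congr rfl; intro i _
      rw [← mul_sum, ← heq i]; ring
    rw [h4]
    simp
    ring
  rw [sub_sq, h2]
  have h5 : ∀ i, m i / (u - T i) * (θ - κ * m i / T i) = θ * (m i / (u - T i)) - κ * (m i ^ 2 / (T i * (u - T i))) := by
    intro i
    rw [mul_sub, mul_comm]
    congr 1
    rw [div_mul_div_comm, mul_div_assoc']; ring
  simp_rw [h5, sum_sub_distrib, ← mul_sum]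
  ring

lemma one_var {F : Type*} [CommRing F] (x : F) (k : ℕ) :
    (2 * k + 1) * (x - 1) - 2 * x + 2 * x ^ (k + 1) - (4 * k + 1) * x ^ (k + 1) * (x - 1)
      = - (x - 1) ^ 2 * ∑ i ∈ range (k + 1), (2 * k + 2 * i + 1) * x ^ i := by
  have h : ∀ N : ℕ, (x - 1) ^ 2 * ∑ i ∈ range (N + 1), (2 * (k : F) + 2 * i + 1) * x ^ i =
      -((2 * k + 1) * (x - 1) - 2 * x + 2 * x ^ (N + 1) - (2 * k + 2 * N + 1) * x ^ (N + 1) * (x - 1)) := by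
    intro N
    induction N with
    | zero => simp; ring
    | succ N ih => rw [sum_range_succ, mul_add, ih]; push_cast; ring
  rw [neg_mul, h k]; ring

lemma per_pt {F : Type*} [Field F] (u T : F) (k : ℕ) (hT : T ≠ 0) (hu : u ≠ T) (κ : F) (hκ : 4 * κ = 4 * k + 1) :
    (2 * k + 1) * ((T ^ k)⁻¹ / (u - T)) - 2 * u * ((T ^ k)⁻¹ / (u - T) ^ 2)
      + 2 * u ^ (k + 1) * (((T ^ k)⁻¹) ^ 2 / (u - T) ^ 2 - 2 * κ * (((T ^ k)⁻¹) ^ 2 / (T * (u - T))))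
    = - ∑ i ∈ range (k + 1), (2 * k + 2 * i + 1) * (T ^ (k + 1 + i))⁻¹ * u ^ i := by
  obtain ⟨x, rfl⟩ : ∃ x, u = x * T := ⟨u / T, by field_simp⟩
  have hx : x - 1 ≠ 0 := by
    intro h; apply hu; rw [sub_eq_zero.mp h, one_mul]
  have h1 : x * T - T = (x - 1) * T := by ring
  have h2 : ∑ i ∈ range (k + 1), (2 * (k : F) + 2 * i + 1) * (T ^ (k + 1 + i))⁻¹ * (x * T) ^ i
      = (T ^ (k + 1))⁻¹ * ∑ i ∈ range (k + 1), (2 * k + 2 * i + 1) * x ^ i := by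
    rw [mul_sum]
    apply sum_congr rfl; intro i _
    rw [pow_add T (k + 1) i, mul_pow]; field_simp
  have h3 := one_var x k
  rw [h2, h1]
  have h4 : ∑ i ∈ range (k + 1), (2 * (k : F) + 2 * i + 1) * x ^ i = -((2 * k + 1) * (x - 1) - 2 * x + 2 * x ^ (k + 1) - (4 * k + 1) * x ^ (k + 1) * (x - 1)) / (x - 1) ^ 2 := by
    rw [h3]; field_simp
  rw [h4, ← hκ, mul_pow]
  field_simp
  ring

lemma sigma_two {n k : ℕ} {T : Fin n → ℝ} {θ κ : ℝ} (h0 : ∀ i, 0 < T i) (hinj : Function.Injective T)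
    (hκ : 4 * κ = 4 * k + 1)
    (heq : ∀ i, ∑ j, (T j ^ k)⁻¹ / (T i - T j) + κ * (T i ^ k)⁻¹ / T i = θ)
    (hs : θ + ∑ j, (T j ^ (k + 1))⁻¹ = 1) :
    (4 * k + 3) / 2 * ∑ j, (T j ^ (2 * k + 2))⁻¹ = 1 - θ ^ 2 := by
  have h := sq_identity (fun i => (T i ^ k)⁻¹) T κ θ 0 hinj (fun i => (h0 i).ne) heq
  have e1 : ∑ j, (T j ^ k)⁻¹ / (0 - T j) = - ∑ j, (T j ^ (k + 1))⁻¹ := by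
    rw [← sum_neg_distrib]; apply sum_congr rfl; intro j _
    have := (h0 j).ne'
    rw [zero_sub, pow_succ]; field_simp
  have e2 : ∑ i, (((T i ^ k)⁻¹) ^ 2 / (0 - T i) ^ 2 - 2 * κ * (((T i ^ k)⁻¹) ^ 2 / (T i * (0 - T i)))) = (4 * k + 3) / 2 * ∑ j, (T j ^ (2 * k + 2))⁻¹ := by
    rw [mul_sum]; apply sum_congr rfl; intro j _
    have := (h0 j).ne'
    have h2 : κ = (4 * k + 1) / 4 := by linarith
    rw [zero_sub, h2, show T j ^ (2 * k + 2) = T j ^ k * T j ^ k * T j * T j by ring]; field_simp; ring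
  rw [e1, e2] at h
  have : (- ∑ j, (T j ^ (k + 1))⁻¹ - θ) ^ 2 = 1 := by
    rw [show - ∑ j, (T j ^ (k + 1))⁻¹ - θ = -1 by linarith]; norm_num
  linarith

lemma one_le_T {n k : ℕ} {T : Fin n → ℝ} {θ κ : ℝ} (h0 : ∀ i, 0 < T i) (hinj : Function.Injective T)
    (hκ : 4 * κ = 4 * k + 1)
    (heq : ∀ i, ∑ j, (T j ^ k)⁻¹ / (T i - T j) + κ * (T i ^ k)⁻¹ / T i = θ)
    (hs : θ + ∑ j, (T j ^ (k + 1))⁻¹ = 1) (i : Fin n) : 1 ≤ T i := by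
  have h := sigma_two h0 hinj hκ heq hs
  have h1 : (T i ^ (2 * k + 2))⁻¹ ≤ ∑ j, (T j ^ (2 * k + 2))⁻¹ :=
    single_le_sum (f := fun j => (T j ^ (2 * k + 2))⁻¹) (fun j _ => by have := h0 j; positivity) (mem_univ i)
  have hk : (0 : ℝ) ≤ k := k.cast_nonneg
  have h2 : 0 < (T i ^ (2 * k + 2))⁻¹ := by have := h0 i; positivity
  have h3 : (T i ^ (2 * k + 2))⁻¹ ≤ 1 := by nlinarith
  by_contra hlt
  push Not at hlt
  have h4 : T i ^ (2 * k + 2) < 1 := pow_lt_one₀ (h0 i).le hlt (by omega)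
  have := one_lt_inv_iff₀.mpr ⟨pow_pos (h0 i) _, h4⟩
  linarith

lemma pow_sub_div_le {a b : ℝ} (ha : 0 < a) (hb : 0 < b) (p : ℕ) :
    (a ^ (p + 1) - b ^ (p + 1)) / (a - b) ≤ (p + 1) * (a ^ p + b ^ p) := by
  by_cases h : a = b
  · subst h; simp; positivity
  rw [← Commute.geom_sum₂_mul (Commute.all a b), mul_div_assoc, div_self (sub_ne_zero.mpr h), mul_one]
  calc _ ≤ ∑ i ∈ range (p + 1), (a ^ p + b ^ p) := by
        apply sum_le_sum
        intro i hi
        have hi' : i ≤ p := by simpa [Nat.lt_succ_iff] using hi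
        rcases le_total a b with hab | hab
        · calc a ^ i * b ^ (p + 1 - 1 - i) ≤ b ^ i * b ^ (p + 1 - 1 - i) := by gcongr
            _ = b ^ p := by rw [← pow_add]; congr 1; omega
            _ ≤ _ := by have := pow_pos ha p; linarith
        · calc a ^ i * b ^ (p + 1 - 1 - i) ≤ a ^ i * a ^ (p + 1 - 1 - i) := by gcongr
            _ = a ^ p := by rw [← pow_add]; congr 1; omega
            _ ≤ _ := by have := pow_pos hb p; linarith
    _ = _ := by simp; ring

end Pts


namespace Pts
open Finset

lemma card_bound {n k : ℕ} {T : Fin n → ℝ} {θ κ : ℝ} (h1 : ∀ i, 1 ≤ T i)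
    (hκ : 1 ≤ κ) (hθ : 0 < θ) (hθ1 : θ ≤ 1)
    (heq : ∀ i, ∑ j, (T j ^ k)⁻¹ / (T i - T j) + κ * (T i ^ k)⁻¹ / T i = θ)
    (hs : θ + ∑ j, (T j ^ (k + 1))⁻¹ = 1) : (n : ℝ) ≤ (κ * (k + 1) / θ ^ 2) ^ (k + 1) := by
  have h0 : ∀ i, 0 < T i := fun i => by linarith [h1 i]
  set m : Fin n → ℝ := fun i => (T i ^ k)⁻¹ with hm
  have hm0 : ∀ i, 0 < m i := fun i => by have := h0 i; positivity
  have hm1 : ∀ i, m i ≤ 1 := fun i => inv_le_one_of_one_le₀ (one_le_pow₀ (h1 i))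
  set M : ℕ → ℝ := fun p => ∑ i, m i * T i ^ p with hM
  have hM0 : ∀ p, 0 ≤ M p := fun p => sum_nonneg fun i _ => by
    have := h0 i; have := hm0 i; positivity
  have gen : ∀ p, θ * M p = ∑ i, ∑ j, m i * T i ^ p * (m j / (T i - T j)) + κ * ∑ i, m i ^ 2 * T i ^ p / T i := by
    intro p
    simp only [hM]
    rw [mul_sum, mul_sum, ← sum_add_distrib]
    apply sum_congr rfl; intro i _
    rw [← mul_sum, ← heq i]
    ring
  have hz : θ * M 0 ≤ κ := by
    have ha := antisym univ m T
    rw [gen 0]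
    simp only [pow_zero, mul_one]
    rw [ha, zero_add]
    have : ∑ i, m i ^ 2 / T i ≤ ∑ j, (T j ^ (k + 1))⁻¹ := by
      apply sum_le_sum; intro i _
      have := h0 i
      have e : (T i ^ (k + 1))⁻¹ = m i / T i := by simp only [hm, pow_succ]; field_simp
      rw [e]
      gcongr
      have := hm0 i; have := hm1 i
      nlinarith
    nlinarith
  have hz' : M 0 ≤ κ / θ := by rw [le_div_iff₀ hθ]; linarith
  have hstep : ∀ p, θ * M (p + 1) ≤ ((p + 1) * M 0 + κ) * M p := by
    intro p
    rw [gen (p + 1)]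
    have e1 : ∑ i, ∑ j, m i * T i ^ (p + 1) * (m j / (T i - T j)) = ∑ i, ∑ j, m i * m j * ((T i ^ (p + 1) - T j ^ (p + 1)) / (T i - T j)) / 2 := by
      have e2 : ∑ i, ∑ j, m i * T i ^ (p + 1) * (m j / (T i - T j)) = ∑ i, ∑ j, m j * T j ^ (p + 1) * (m i / (T j - T i)) := sum_comm
      have e3 : ∀ x y : ℝ, x = y → x = (x + y) / 2 := fun x y h => by linarith
      rw [e3 _ _ e2, ← sum_add_distrib, sum_div]
      apply sum_congr rfl; intro i _
      rw [← sum_add_distrib, sum_div]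
      apply sum_congr rfl; intro j _
      rw [← neg_sub (T i) (T j), div_neg]; ring
    have e4 : ∑ i, ∑ j, m i * m j * ((T i ^ (p + 1) - T j ^ (p + 1)) / (T i - T j)) / 2 ≤
        ∑ i, ∑ j, m i * m j * ((p + 1) * (T i ^ p + T j ^ p)) / 2 := by
      apply sum_le_sum; intro i _
      apply sum_le_sum; intro j _
      have := hm0 i; have := hm0 j
      have := pow_sub_div_le (h0 i) (h0 j) p
      gcongr
    have e5 : ∑ i, ∑ j, m i * m j * ((p + 1) * (T i ^ p + T j ^ p)) / 2 = (p + 1) * M 0 * M p := by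
      have e6 : M 0 * M p = ∑ i, ∑ j, m i * (m j * T j ^ p) := by
        simp only [hM, sum_mul_sum, pow_zero, mul_one]
      have e7 : M 0 * M p = ∑ i, ∑ j, m j * (m i * T i ^ p) := by
        rw [e6, sum_comm]
      have e8 : (p + 1) * M 0 * M p = (p + 1) / 2 * (M 0 * M p + M 0 * M p) := by ring
      rw [e8]
      nth_rw 1 [e6]
      rw [e7, ← sum_add_distrib, mul_sum]
      apply sum_congr rfl; intro i _
      rw [← sum_add_distrib, mul_sum]
      apply sum_congr rfl; intro j _
      ring
    have e9 : ∑ i, m i ^ 2 * T i ^ (p + 1) / T i ≤ M p := by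
      apply sum_le_sum; intro i _
      have h0i := h0 i
      have e : m i ^ 2 * T i ^ (p + 1) / T i = m i * (m i * T i ^ p) := by rw [pow_succ (T i)]; field_simp
      rw [e]
      have : 0 ≤ m i * T i ^ p := by have := hm0 i; positivity
      nlinarith [hm1 i]
    nlinarith
  set Q := κ * (k + 1) / θ ^ 2 with hQ
  have hk : (0 : ℝ) ≤ k := k.cast_nonneg
  have hθ2 : θ ^ 2 ≤ θ := by nlinarith
  have hQ0 : κ / θ ≤ Q := by
    rw [hQ]
    apply div_le_div₀ (by positivity) _ (by positivity) hθ2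
    nlinarith
  have hind : ∀ p, p ≤ k → M p ≤ Q ^ (p + 1) := by
    intro p
    induction p with
    | zero => intro _; simpa using hz'.trans hQ0
    | succ p ih =>
      intro hp
      have ih' := ih (by omega)
      have h2 : θ * M (p + 1) ≤ (θ * Q) * M p := by
        refine (hstep p).trans (mul_le_mul_of_nonneg_right ?_ (hM0 p))
        have hpk : (p : ℝ) + 1 ≤ k := by exact_mod_cast hp
        have e : θ * Q = k * (κ / θ) + κ / θ := by rw [hQ]; field_simp
        rw [e]
        have h3 : ((p : ℝ) + 1) * M 0 ≤ k * (κ / θ) := mul_le_mul hpk hz' (hM0 0) hk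
        have h4 : κ ≤ κ / θ := by rw [le_div_iff₀ hθ]; nlinarith
        linarith
      have h3 : M (p + 1) ≤ Q * M p := by
        rw [mul_assoc] at h2
        exact le_of_mul_le_mul_left h2 hθ
      have hQp : 0 ≤ Q := by rw [hQ]; positivity
      calc M (p + 1) ≤ Q * M p := h3
        _ ≤ Q * Q ^ (p + 1) := by gcongr
        _ = _ := by ring
  have hfin := hind k le_rfl
  have : M k = n := by
    simp only [hM, hm]
    rw [sum_congr rfl (fun i _ => inv_mul_cancel₀ (pow_pos (h0 i) k).ne')]
    simp
  rwa [this] at hfin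

/-- normalized point configurations with small `θ`. -/
theorem exists_norm (k : ℕ) (hk : 1 ≤ k) (κ : ℝ) (hκ : 4 * κ = 4 * k + 1) (η : ℝ) (hη : 0 < η) :
    ∃ (n : ℕ) (T : Fin n → ℝ) (θ : ℝ), 0 < θ ∧ θ < η ∧ θ ≤ 1 ∧ (∀ i, 1 ≤ T i) ∧ Function.Injective T ∧
      (∀ i, ∑ j, (T j ^ k)⁻¹ / (T i - T j) + κ * (T i ^ k)⁻¹ / T i = θ) ∧
      θ + ∑ j, (T j ^ (k + 1))⁻¹ = 1 := by
  have hk1 : (1 : ℝ) ≤ k := by exact_mod_cast hk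
  have hκ1 : 1 ≤ κ := by linarith
  obtain ⟨n, hn⟩ := exists_nat_gt ((κ * (k + 1) / η ^ 2) ^ (k + 1))
  obtain ⟨t, ht0, htinj, hteq⟩ := exists_pts n k κ hκ1
  set s := 1 + ∑ j, (t j ^ (k + 1))⁻¹ with hs
  have hsum0 : 0 ≤ ∑ j, (t j ^ (k + 1))⁻¹ := sum_nonneg fun j _ => by have := ht0 j; positivity
  have hs1 : 1 ≤ s := by linarith
  have hs0 : 0 < s := by linarith
  obtain ⟨μ, hμ0, hμ⟩ : ∃ μ : ℝ, 0 < μ ∧ μ ^ (k + 1) = s := by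
    refine ⟨s ^ ((1 : ℝ) / ((k + 1 : ℕ) : ℝ)), Real.rpow_pos_of_pos hs0 _, ?_⟩
    rw [← Real.rpow_natCast, ← Real.rpow_mul hs0.le]
    rw [one_div, inv_mul_cancel₀ (by positivity), Real.rpow_one]
  let T : Fin n → ℝ := fun i => t i * μ
  have hT0 : ∀ i, 0 < T i := fun i => mul_pos (ht0 i) hμ0
  have hTinj : Function.Injective T := fun a b h => htinj (mul_right_cancel₀ hμ0.ne' h)
  have heq : ∀ i, ∑ j, (T j ^ k)⁻¹ / (T i - T j) + κ * (T i ^ k)⁻¹ / T i = s⁻¹ := by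
    intro i
    have e : s⁻¹ = s⁻¹ * (∑ j, (t j ^ k)⁻¹ / (t i - t j) + κ * (t i ^ k)⁻¹ / t i) := by
      rw [hteq i, mul_one]
    rw [e, mul_add, mul_sum, ← hμ]
    congr 1
    · apply sum_congr rfl; intro j _
      simp only [T]
      rw [← sub_mul, mul_pow, pow_succ, div_eq_mul_inv, div_eq_mul_inv, mul_inv, mul_inv, mul_inv]
      ring
    · simp only [T]
      rw [mul_pow, pow_succ, div_eq_mul_inv, div_eq_mul_inv, mul_inv, mul_inv, mul_inv]
      ring
  have hsn : s⁻¹ + ∑ j, (T j ^ (k + 1))⁻¹ = 1 := by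
    have : ∑ j, (T j ^ (k + 1))⁻¹ = s⁻¹ * ∑ j, (t j ^ (k + 1))⁻¹ := by
      rw [mul_sum]; apply sum_congr rfl; intro j _
      simp only [T]; rw [mul_pow, hμ, mul_inv, mul_comm]
    rw [this]
    have : ∑ j, (t j ^ (k + 1))⁻¹ = s - 1 := by rw [hs]; ring
    rw [this, mul_sub, inv_mul_cancel₀ hs0.ne']; ring
  have h1 := one_le_T hT0 hTinj hκ heq hsn
  have hθ1 : s⁻¹ ≤ 1 := inv_le_one_of_one_le₀ hs1
  refine ⟨n, T, s⁻¹, inv_pos.mpr hs0, ?_, hθ1, h1, hTinj, heq, hsn⟩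
  by_contra hcon
  push Not at hcon
  have hb := card_bound h1 hκ1 (inv_pos.mpr hs0) hθ1 heq hsn
  have : (κ * (k + 1) / s⁻¹ ^ 2) ^ (k + 1) ≤ (κ * (k + 1) / η ^ 2) ^ (k + 1) := by gcongr
  linarith

end Pts


namespace Pts
open Finset

lemma hasDerivAt_prod {n : ℕ} (T : Fin n → ℂ) (hT : ∀ i, T i ≠ 0) (z : ℂ) (hz : ∀ i, z ^ 2 ≠ T i) (s : Finset (Fin n)) :
    HasDerivAt (fun z : ℂ => ∏ j ∈ s, (1 - z ^ 2 / T j))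
      ((∑ j ∈ s, 2 * z / (z ^ 2 - T j)) * ∏ j ∈ s, (1 - z ^ 2 / T j)) z := by
  classical
  induction s using Finset.induction_on with
  | empty => simpa using hasDerivAt_const z (1 : ℂ)
  | insert a s ha ih =>
    simp_rw [prod_insert ha, sum_insert ha]
    have h1 : HasDerivAt (fun z : ℂ => 1 - z ^ 2 / T a) (-(2 * z / T a)) z := by
      have := ((hasDerivAt_pow 2 z).div_const (T a)).const_sub 1
      simpa using this
    refine (h1.fun_mul ih).congr_deriv (Eq.symm ?_)
    have h2 := hT a
    have h3 := sub_ne_zero.mpr (hz a)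
    have h4 : 2 * z / (z ^ 2 - T a) * (1 - z ^ 2 / T a) = -(2 * z / T a) := by
      field_simp; ring
    rw [← h4]; ring

lemma geom_pt {F : Type*} [Field F] (u T : F) (hT : T ≠ 0) (hu : u ≠ T) (k : ℕ) :
    1 / (u - T) + ∑ m ∈ range k, (T ^ (m + 1))⁻¹ * u ^ m = u ^ k * ((T ^ k)⁻¹ / (u - T)) := by
  have h3 := sub_ne_zero.mpr hu
  induction k with
  | zero => simp
  | succ k ih =>
    rw [sum_range_succ, ← add_assoc, ih, pow_succ, pow_succ]
    field_simp
    ring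

theorem part3 (k : ℕ) (hk : 1 ≤ k) (η : ℝ) (hη : 0 < η) :
    ∃ (c : ℕ → ℝ) (w : ℂ → ℂ), Differentiable ℂ w ∧ w 0 = 1 ∧ deriv w 0 = 0 ∧
      (∀ z, deriv (deriv w) z = -(∑ i ∈ range (k + 2), (c i : ℂ) * z ^ (2 * k + 2 * i)) * w z) ∧
      (∀ z, w z = 0 → z.im = 0) ∧ (∀ i, |c i| ≤ 8 * k + 4) ∧ (∀ i, i ≤ k → 0 ≤ c i) ∧
      |c (k + 1)| ≤ η ∧ 1 ≤ c k := by
  set κ : ℝ := (4 * k + 1) / 4 with hκd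
  have hκ : 4 * κ = 4 * k + 1 := by rw [hκd]; ring
  obtain ⟨n, T, θ, hθ, hθη, hθ1, hT1, hinj, heq, hs⟩ := exists_norm k hk κ hκ (min (1 / 2) (η / 4)) (by positivity)
  have hk1 : (1 : ℝ) ≤ k := by exact_mod_cast hk
  have hT0 : ∀ i, 0 < T i := fun i => by linarith [hT1 i]
  have hθa : θ < 1 / 2 := hθη.trans_le (min_le_left _ _)
  have hθb : θ < η / 4 := hθη.trans_le (min_le_right _ _)
  have hsig := sigma_two hT0 hinj hκ heq hs
  set sig : ℕ → ℝ := fun p => ∑ j, (T j ^ p)⁻¹ with hsigd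
  have hsig0 : ∀ p, 0 ≤ sig p := fun p => sum_nonneg fun j _ => by have := hT0 j; positivity
  have hsigle : ∀ p q, p ≤ q → sig q ≤ sig p := fun p q hpq => sum_le_sum fun j _ => by
    have := hT0 j
    exact inv_anti₀ (by positivity) (pow_le_pow_right₀ (hT1 j) hpq)
  have hs' : θ + sig (k + 1) = 1 := hs
  let c : ℕ → ℝ := fun i => if i ≤ k then 2 * (2 * k + 2 * i + 1) * (sig (k + 1 + i) + if i = 0 then θ else 0) else -(4 * θ ^ 2)
  let E : ℂ → ℂ := fun z => ∑ m ∈ range k, ((sig (m + 1) / (m + 1) : ℝ) : ℂ) * z ^ (2 * m + 2) - ((θ / (k + 1) : ℝ) : ℂ) * z ^ (2 * k + 2)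
  let Tc : Fin n → ℂ := fun i => (T i : ℂ)
  have hTc0 : ∀ i, Tc i ≠ 0 := fun i => by simpa [Tc] using (hT0 i).ne'
  have hTcinj : Function.Injective Tc := fun a b h => hinj (by simpa [Tc] using h)
  let w : ℂ → ℂ := fun z => (∏ j, (1 - z ^ 2 / Tc j)) * exp (E z)
  have hE : ∀ z, HasDerivAt E (2 * z * (∑ m ∈ range k, (sig (m + 1) : ℂ) * (z ^ 2) ^ m) - 2 * θ * z ^ (2 * k + 1)) z := by
    intro z
    have h1 : HasDerivAt E (∑ m ∈ range k, ((sig (m + 1) / (m + 1) : ℝ) : ℂ) * (((2 * m + 2 : ℕ) : ℂ) * z ^ (2 * m + 1))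
        - ((θ / (k + 1) : ℝ) : ℂ) * (((2 * k + 2 : ℕ) : ℂ) * z ^ (2 * k + 1))) z := by
      apply HasDerivAt.sub
      · apply HasDerivAt.fun_sum
        intro m _
        exact (hasDerivAt_pow (2 * m + 2) z).const_mul _
      · exact (hasDerivAt_pow (2 * k + 2) z).const_mul _
    refine h1.congr_deriv (Eq.symm ?_)
    rw [mul_sum]
    congr 1
    · apply sum_congr rfl; intro m _
      have : (m : ℂ) + 1 ≠ 0 := by exact_mod_cast Nat.succ_ne_zero m
      push_cast
      field_simp
      ring
    · have : (k : ℂ) + 1 ≠ 0 := by exact_mod_cast Nat.succ_ne_zero k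
      push_cast
      field_simp
  have hwd : Differentiable ℂ w := by
    intro z
    apply DifferentiableAt.mul _ (hE z).differentiableAt.cexp
    fun_prop
  let R : ℂ → ℂ := fun u => ∑ j, (Tc j ^ k)⁻¹ / (u - Tc j) - θ
  let L : ℂ → ℂ := fun z => 2 * z ^ (2 * k + 1) * R (z ^ 2)
  let U : Set ℂ := {z | ∀ i, z ^ 2 ≠ Tc i}
  have hUo : IsOpen U := by
    have : U = ⋂ i, {z : ℂ | z ^ 2 ≠ Tc i} := by ext z; simp [U]
    rw [this]
    exact isOpen_iInter_of_finite fun i => isOpen_ne_fun (by fun_prop) (by fun_prop)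
  have hw1 : ∀ z ∈ U, HasDerivAt w (L z * w z) z := by
    intro z hz
    refine ((hasDerivAt_prod Tc hTc0 z hz univ).fun_mul (hE z).cexp).congr_deriv (Eq.symm ?_)
    have hsum : ∑ m ∈ range k, (sig (m + 1) : ℂ) * (z ^ 2) ^ m = ∑ j, ∑ m ∈ range k, (Tc j ^ (m + 1))⁻¹ * (z ^ 2) ^ m := by
      rw [sum_comm]; apply sum_congr rfl; intro m _
      rw [← sum_mul]; simp [hsigd, Tc]
    have hL : L z = (∑ j, 2 * z / (z ^ 2 - Tc j)) + (2 * z * (∑ m ∈ range k, (sig (m + 1) : ℂ) * (z ^ 2) ^ m) - 2 * θ * z ^ (2 * k + 1)) := by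
      have e1 : ∑ j, 2 * z / (z ^ 2 - Tc j) = 2 * z * ∑ j, 1 / (z ^ 2 - Tc j) := by
        rw [mul_sum]; apply sum_congr rfl; intro j _; ring
      rw [hsum, e1, add_sub_assoc', ← mul_add, ← sum_add_distrib, sum_congr rfl (fun j _ => geom_pt (z ^ 2) (Tc j) (hTc0 j) (hz j) k), ← mul_sum]
      simp only [L, R]
      ring
    rw [hL]; simp only [w]; ring
  have hLd : ∀ z ∈ U, HasDerivAt L (2 * ((2 * k + 1) * z ^ (2 * k)) * R (z ^ 2) - 2 * z ^ (2 * k + 1) * (2 * z * ∑ j, (Tc j ^ k)⁻¹ / (z ^ 2 - Tc j) ^ 2)) z := by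
    intro z hz
    have hR : HasDerivAt (fun z => R (z ^ 2)) (∑ j, -(2 * z * ((Tc j ^ k)⁻¹ / (z ^ 2 - Tc j) ^ 2))) z := by
      apply HasDerivAt.sub_const
      apply HasDerivAt.fun_sum
      intro j _
      have h3 := sub_ne_zero.mpr (hz j)
      have := (((hasDerivAt_pow 2 z).sub_const (Tc j)).fun_inv h3).const_mul ((Tc j ^ k)⁻¹)
      refine this.congr_deriv ?_
      simp; ring
    have hp := (hasDerivAt_pow (2 * k + 1) z).const_mul 2
    refine (hp.fun_mul hR).congr_deriv (Eq.symm ?_)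
    rw [sum_neg_distrib, ← mul_sum]
    push_cast
    ring
  have hP : ∀ z ∈ U, (2 * ((2 * k + 1) * z ^ (2 * k)) * R (z ^ 2) - 2 * z ^ (2 * k + 1) * (2 * z * ∑ j, (Tc j ^ k)⁻¹ / (z ^ 2 - Tc j) ^ 2)) + L z ^ 2 = -(∑ i ∈ range (k + 2), (c i : ℂ) * z ^ (2 * k + 2 * i)) := by
    intro z hz
    have hsq := sq_identity (fun i => (Tc i ^ k)⁻¹) Tc (κ : ℂ) (θ : ℂ) (z ^ 2) hTcinj hz (by
      intro i; simp only [Tc]; exact_mod_cast heq i)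
    have e1 : ∑ i ∈ range (k + 2), (c i : ℂ) * z ^ (2 * k + 2 * i) =
        2 * z ^ (2 * k) * (∑ j, ∑ i ∈ range (k + 1), (2 * (k : ℂ) + 2 * i + 1) * (Tc j ^ (k + 1 + i))⁻¹ * (z ^ 2) ^ i) + 2 * (2 * k + 1) * θ * z ^ (2 * k) - 4 * θ ^ 2 * z ^ (4 * k + 2) := by
      rw [sum_range_succ, sum_comm]
      have e2 : ∑ i ∈ range (k + 1), (c i : ℂ) * z ^ (2 * k + 2 * i) = ∑ i ∈ range (k + 1), (2 * (2 * (k : ℂ) + 2 * i + 1) * sig (k + 1 + i) * z ^ (2 * k + 2 * i) + if i = 0 then 2 * (2 * k + 1) * θ * z ^ (2 * k) else 0) := by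
        apply sum_congr rfl; intro i hi
        have hi' : i ≤ k := by simpa [Nat.lt_succ_iff] using hi
        simp only [c, if_pos hi']
        split_ifs with h
        · subst h; push_cast; ring
        · push_cast; ring
      rw [e2, sum_add_distrib, sum_ite_eq' (range (k + 1)) 0, if_pos (by simp)]
      have e3 : (c (k + 1) : ℂ) = -(4 * θ ^ 2) := by simp [c]
      rw [e3, show 2 * k + 2 * (k + 1) = 4 * k + 2 by ring, mul_sum]
      have e4 : ∑ i ∈ range (k + 1), 2 * (2 * (k : ℂ) + 2 * i + 1) * sig (k + 1 + i) * z ^ (2 * k + 2 * i) = ∑ i ∈ range (k + 1), 2 * z ^ (2 * k) * ∑ j, (2 * (k : ℂ) + 2 * i + 1) * (Tc j ^ (k + 1 + i))⁻¹ * (z ^ 2) ^ i := by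
        apply sum_congr rfl; intro i _
        rw [← sum_mul, ← mul_sum]
        simp only [hsigd, Tc]
        push_cast
        ring
      rw [e4]; ring
    have e5 : ∑ j, ∑ i ∈ range (k + 1), (2 * (k : ℂ) + 2 * i + 1) * (Tc j ^ (k + 1 + i))⁻¹ * (z ^ 2) ^ i
        = -∑ j, ((2 * k + 1) * ((Tc j ^ k)⁻¹ / (z ^ 2 - Tc j)) - 2 * z ^ 2 * ((Tc j ^ k)⁻¹ / (z ^ 2 - Tc j) ^ 2)
      + 2 * (z ^ 2) ^ (k + 1) * (((Tc j ^ k)⁻¹) ^ 2 / (z ^ 2 - Tc j) ^ 2 - 2 * κ * (((Tc j ^ k)⁻¹) ^ 2 / (Tc j * (z ^ 2 - Tc j))))) := by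
      rw [← sum_neg_distrib]; apply sum_congr rfl; intro j _
      rw [per_pt (z ^ 2) (Tc j) k (hTc0 j) (hz j) κ (by exact_mod_cast hκ), neg_neg]
    rw [e1, e5, sum_add_distrib, sum_sub_distrib, ← mul_sum, ← mul_sum, ← mul_sum]
    have hsq' : ∑ i, ((fun i => (Tc i ^ k)⁻¹) i ^ 2 / (z ^ 2 - Tc i) ^ 2 - 2 * (κ : ℂ) * ((fun i => (Tc i ^ k)⁻¹) i ^ 2 / (Tc i * (z ^ 2 - Tc i)))) = R (z ^ 2) ^ 2 - θ ^ 2 := by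
      rw [eq_sub_iff_add_eq]; exact hsq.symm
    simp only at hsq'
    rw [hsq']
    have e6 : ∑ j, (Tc j ^ k)⁻¹ / (z ^ 2 - Tc j) = R (z ^ 2) + θ := by simp [R]
    rw [e6]
    simp only [L]
    ring
  have hdw : ∀ z ∈ U, deriv (deriv w) z = -(∑ i ∈ range (k + 2), (c i : ℂ) * z ^ (2 * k + 2 * i)) * w z := by
    intro z hz
    have h1 : deriv w =ᶠ[nhds z] fun y => L y * w y := by
      filter_upwards [hUo.mem_nhds hz] with y hy
      exact (hw1 y hy).deriv
    rw [h1.deriv_eq, ((hLd z hz).fun_mul (hw1 z hz)).deriv, ← hP z hz]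
    ring
  have hwc : ContDiff ℂ 2 w := hwd.contDiff
  have hdd : Continuous (deriv (deriv w)) := by
    have := hwc.continuous_iteratedDeriv 2 le_rfl
    rwa [iteratedDeriv_succ, iteratedDeriv_one] at this
  have hUd : Dense U := by
    have hfin : (Uᶜ).Countable := by
      apply Set.Finite.countable
      have : Uᶜ = ⋃ i, {z : ℂ | z ^ 2 = Tc i} := by ext z; simp [U]
      rw [this]
      apply Set.finite_iUnion
      intro i
      have := (Polynomial.nthRoots 2 (Tc i)).toFinset.finite_toSet
      refine this.subset ?_
      intro z hz
      simpa [Polynomial.mem_nthRoots] using hz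
    simpa using hfin.dense_compl ℝ
  have h0U : (0 : ℂ) ∈ U := fun i => by simpa using (hTc0 i).symm
  refine ⟨c, w, hwd, ?_, ?_, ?_, ?_, ?_, ?_, ?_, ?_⟩
  · simp [w, E]
  · rw [(hw1 0 h0U).deriv]; simp [L]
  · have := Continuous.ext_on hUd hdd (g := fun z => -(∑ i ∈ range (k + 2), (c i : ℂ) * z ^ (2 * k + 2 * i)) * w z) (by
      have := hwd.continuous
      fun_prop) (fun z hz => hdw z hz)
    exact fun z => congrFun this z
  · intro z hz
    simp only [w, mul_eq_zero, exp_ne_zero, or_false, prod_eq_zero_iff] at hz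
    obtain ⟨j, -, hj⟩ := hz
    have h1 : z ^ 2 = (T j : ℂ) := by
      have := hTc0 j
      have h2 : z ^ 2 / Tc j = 1 := (sub_eq_zero.mp hj).symm
      exact (div_eq_one_iff_eq this).mp h2
    have hre := congrArg Complex.re h1
    have him := congrArg Complex.im h1
    simp [sq] at hre him
    have h3 := hT0 j
    by_contra hne
    have : z.re = 0 := by
      have : z.re * z.im = 0 := by linarith
      exact (mul_eq_zero.mp this).resolve_right hne
    rw [this] at hre
    nlinarith [mul_self_nonneg z.im]
  · intro i
    simp only [c]
    split_ifs with h1 h2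
    · subst h2
      simp only [add_zero]
      rw [add_comm (sig _), hs', abs_of_nonneg (by positivity)]
      push_cast; linarith
    · have hi : (i : ℝ) ≤ k := by exact_mod_cast h1
      have h3 := hsig0 (k + 1 + i)
      have h4 := hsigle (k + 1) (k + 1 + i) (by omega)
      rw [add_zero, abs_of_nonneg (by positivity)]
      have h5 : sig (k + 1 + i) ≤ 1 := by linarith
      have h6 : 2 * (2 * (k : ℝ) + 2 * i + 1) * sig (k + 1 + i) ≤ 2 * (2 * (k : ℝ) + 2 * i + 1) * 1 := by gcongr
      linarith
    · rw [abs_neg, abs_of_nonneg (by positivity)]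
      nlinarith
  · intro i hi
    simp only [c, if_pos hi]
    have h3 := hsig0 (k + 1 + i)
    split_ifs <;> positivity
  · have : c (k + 1) = -(4 * θ ^ 2) := by simp [c]
    rw [this, abs_neg, abs_of_nonneg (by positivity)]
    nlinarith
  · have hk0 : k ≠ 0 := by omega
    have : c k = 2 * (4 * k + 1) * sig (2 * k + 1) := by
      simp only [c, le_refl, if_true, hk0, if_false, add_zero]
      rw [show k + 1 + k = 2 * k + 1 by ring]; ring
    rw [this]
    have h1 := hsigle (2 * k + 1) (2 * k + 2) (by omega)
    have h2 : (4 * (k : ℝ) + 3) / 2 * sig (2 * k + 2) = 1 - θ ^ 2 := hsig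
    have h3 := hsig0 (2 * k + 2)
    nlinarith

end Pts


namespace Lim
open Finset Filter Topology

/-- Taylor coefficients of the normalized even-type solution. -/
noncomputable def bb (k : ℕ) (c : ℕ → ℝ) : ℕ → ℝ
  | 0 => 1
  | 1 => 0
  | (m + 2) => -(∑ i ∈ range (k + 2), if 2 * k + 2 * i ≤ m then c i * bb k c (m - (2 * k + 2 * i)) else 0)
      / ((m + 2) * (m + 1))
termination_by m => m
decreasing_by omega

lemma bb_succ (k : ℕ) (c : ℕ → ℝ) (m : ℕ) : bb k c (m + 2) =
    -(∑ i ∈ range (k + 2), if 2 * k + 2 * i ≤ m then c i * bb k c (m - (2 * k + 2 * i)) else 0)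
      / ((m + 2) * (m + 1)) := by rw [bb]

lemma bb_cont (k m : ℕ) : Continuous (fun c => bb k c m) := by
  induction m using Nat.strong_induction_on with
  | _ m ih =>
    match m with
    | 0 => simp only [bb]; exact continuous_const
    | 1 => simp only [bb]; exact continuous_const
    | m + 2 =>
      simp only [bb_succ]
      apply Continuous.div_const
      apply Continuous.neg
      apply continuous_finsetSum
      intro i _
      split_ifs
      · exact (continuous_apply i).mul (ih _ (by omega))
      · exact continuous_const

lemma bb_bound (k : ℕ) (K R : ℝ) (hK : 0 ≤ K) (hR : 1 ≤ R) :
    ∃ C : ℝ, ∀ c : ℕ → ℝ, (∀ i, |c i| ≤ K) → ∀ m, |bb k c m| * R ^ m ≤ C := by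
  set D := ∑ i ∈ range (k + 2), K * R ^ (2 * k + 2 * i + 2) with hD
  have hD0 : 0 ≤ D := sum_nonneg fun i _ => by positivity
  obtain ⟨M, hM⟩ := exists_nat_ge D
  set A := max 1 D with hA
  have hA1 : 1 ≤ A := le_max_left _ _
  have hAD : D ≤ A := le_max_right _ _
  refine ⟨A ^ M, fun c hc m => ?_⟩
  have key : ∀ m, |bb k c m| * R ^ m ≤ A ^ (min m M) := by
    intro m
    induction m using Nat.strong_induction_on with
    | _ m ih =>
      match m with
      | 0 => simp [bb]
      | 1 => simp [bb]; positivity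
      | m + 2 =>
        rw [bb_succ, abs_div, abs_neg, abs_of_nonneg (by positivity : (0 : ℝ) ≤ (m + 2) * (m + 1))]
        have h1 : |∑ i ∈ range (k + 2), if 2 * k + 2 * i ≤ m then c i * bb k c (m - (2 * k + 2 * i)) else 0| * R ^ (m + 2) ≤ D * A ^ (min m M) := by
          rw [hD, sum_mul]
          calc _ ≤ (∑ i ∈ range (k + 2), |if 2 * k + 2 * i ≤ m then c i * bb k c (m - (2 * k + 2 * i)) else 0|) * R ^ (m + 2) := by
                gcongr; exact abs_sum_le_sum_abs _ _
            _ = ∑ i ∈ range (k + 2), |if 2 * k + 2 * i ≤ m then c i * bb k c (m - (2 * k + 2 * i)) else 0| * R ^ (m + 2) := by rw [sum_mul]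
            _ ≤ _ := by
                apply sum_le_sum
                intro i _
                split_ifs with h
                · rw [abs_mul]
                  have h2 := ih (m - (2 * k + 2 * i)) (by omega)
                  have e : R ^ (m + 2) = R ^ (2 * k + 2 * i + 2) * R ^ (m - (2 * k + 2 * i)) := by
                    rw [← pow_add]; congr 1; omega
                  rw [e]
                  have h3 : A ^ (min (m - (2 * k + 2 * i)) M) ≤ A ^ (min m M) :=
                    pow_le_pow_right₀ hA1 (by omega)
                  calc _ = |c i| * R ^ (2 * k + 2 * i + 2) * (|bb k c (m - (2 * k + 2 * i))| * R ^ (m - (2 * k + 2 * i))) := by ring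
                    _ ≤ K * R ^ (2 * k + 2 * i + 2) * A ^ (min m M) := by
                      gcongr
                      · exact hc i
                      · exact h2.trans h3
                · simp; positivity
        rw [div_mul_eq_mul_div, div_le_iff₀ (by positivity)]
        refine h1.trans ?_
        have hm0 : (0 : ℝ) ≤ m := m.cast_nonneg
        have hp : 0 < A ^ (min m M) := by positivity
        rcases lt_or_ge m M with hmM | hmM
        · have h4 : A ^ (min m M) * A ≤ A ^ (min (m + 2) M) := by
            rw [← pow_succ]; exact pow_le_pow_right₀ hA1 (by omega)
          calc D * A ^ (min m M) ≤ A ^ (min m M) * A := by rw [mul_comm]; gcongr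
            _ ≤ A ^ (min (m + 2) M) := h4
            _ ≤ A ^ (min (m + 2) M) * ((m + 2) * (m + 1)) := by
              apply le_mul_of_one_le_right (by positivity); nlinarith
        · have h4 : A ^ (min m M) ≤ A ^ (min (m + 2) M) := pow_le_pow_right₀ hA1 (by omega)
          have h5 : (M : ℝ) ≤ m := by exact_mod_cast hmM
          calc D * A ^ (min m M) = A ^ (min m M) * D := mul_comm _ _
            _ ≤ A ^ (min (m + 2) M) * ((m + 2) * (m + 1)) := by
              gcongr; nlinarith
  exact (key m).trans (pow_le_pow_right₀ hA1 (min_le_right _ _))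

lemma taylor (k : ℕ) (c : ℕ → ℝ) (w : ℂ → ℂ) (hw : Differentiable ℂ w) (h0 : w 0 = 1) (h1 : deriv w 0 = 0)
    (hode : ∀ z, deriv (deriv w) z = -(∑ i ∈ range (k + 2), (c i : ℂ) * z ^ (2 * k + 2 * i)) * w z) (z : ℂ) :
    HasSum (fun m => (bb k c m : ℂ) * z ^ m) (w z) := by
  have key : ∀ m, iteratedDeriv m w 0 = (m.factorial : ℂ) * bb k c m := by
    intro m
    induction m using Nat.strong_induction_on with
    | _ m ih =>
      match m with
      | 0 => simp [bb, h0]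
      | 1 => simp [bb, h1]
      | m + 2 =>
        rw [iteratedDeriv_succ', iteratedDeriv_succ']
        have e : deriv (deriv w) = fun z => ∑ i ∈ range (k + 2), (-(c i : ℂ)) * (z ^ (2 * k + 2 * i) * w z) := by
          funext z; rw [hode, neg_mul, sum_mul, ← sum_neg_distrib]
          apply sum_congr rfl; intro i _; ring
        have hwc : ∀ n : ℕ, ContDiff ℂ n w := fun n => hw.contDiff
        have hpc : ∀ n e : ℕ, ContDiff ℂ n (fun z : ℂ => z ^ e) := fun n e => contDiff_id.pow e
        rw [e, iteratedDeriv_fun_sum (fun i _ => (contDiff_const.mul ((hpc m _).mul (hwc m))).contDiffAt)]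
        have e2 : ∀ i, iteratedDeriv m (fun z => (-(c i : ℂ)) * (z ^ (2 * k + 2 * i) * w z)) 0
            = -(m.factorial : ℂ) * (if 2 * k + 2 * i ≤ m then (c i : ℂ) * bb k c (m - (2 * k + 2 * i)) else 0) := by
          intro i
          rw [iteratedDeriv_const_mul_field, iteratedDeriv_fun_mul (hpc m _).contDiffAt (hwc m).contDiffAt]
          simp only [iteratedDeriv_fun_pow_zero]
          split_ifs with h
          · rw [sum_eq_single (2 * k + 2 * i)]
            · rw [if_pos rfl, ih _ (by omega)]
              have := Nat.choose_mul_factorial_mul_factorial h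
              rw [← this]; push_cast; ring
            · intro j _ hj; rw [if_neg hj]; simp
            · intro hn; exact absurd (mem_range.mpr (by omega)) hn
          · rw [sum_eq_zero]
            · simp
            · intro j hj
              have : j ≠ 2 * k + 2 * i := by have := mem_range.mp hj; omega
              rw [if_neg this]; simp
        rw [sum_congr rfl (fun i _ => e2 i), ← mul_sum, bb_succ]
        have h4 : (m : ℂ) + 1 ≠ 0 := by exact_mod_cast Nat.succ_ne_zero m
        have h5 : (m : ℂ) + 2 ≠ 0 := by exact_mod_cast Nat.succ_ne_zero (m + 1)
        have h6 : ((m + 2).factorial : ℂ) = (m + 2) * (m + 1) * m.factorial := by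
          rw [Nat.factorial_succ, Nat.factorial_succ]; push_cast; ring
        rw [h6]
        have h7 : ((∑ i ∈ range (k + 2), if 2 * k + 2 * i ≤ m then c i * bb k c (m - (2 * k + 2 * i)) else 0 : ℝ) : ℂ) =
          ∑ i ∈ range (k + 2), if 2 * k + 2 * i ≤ m then (c i : ℂ) * bb k c (m - (2 * k + 2 * i)) else 0 := by
          push_cast
          apply sum_congr rfl; intro i _
          split_ifs <;> simp
        rw [← h7, ofReal_div, ofReal_neg]
        push_cast
        field_simp
  have := Complex.hasSum_taylorSeries_of_entire hw 0 z
  have e : (fun m => (bb k c m : ℂ) * z ^ m) =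
      fun n => ((n.factorial : ℂ))⁻¹ • (z - 0) ^ n • iteratedDeriv n w 0 := by
    funext m
    rw [key m]
    have : (m.factorial : ℂ) ≠ 0 := by exact_mod_cast m.factorial_ne_zero
    simp only [smul_eq_mul, sub_zero]
    field_simp
  rw [e]; exact this

/-- The limiting solution. -/
theorem limit_sol (k : ℕ) (K : ℝ) (hK : 0 ≤ K) (c : ℕ → ℕ → ℝ) (w : ℕ → ℂ → ℂ) (hc : ∀ n i, |c n i| ≤ K)
    (hw : ∀ n, Differentiable ℂ (w n)) (h0 : ∀ n, w n 0 = 1) (h1 : ∀ n, deriv (w n) 0 = 0)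
    (hode : ∀ n z, deriv (deriv (w n)) z = -(∑ i ∈ range (k + 2), (c n i : ℂ) * z ^ (2 * k + 2 * i)) * w n z)
    (c' : ℕ → ℝ) (hlim : Tendsto c atTop (𝓝 c')) :
    ∃ W : ℂ → ℂ, Differentiable ℂ W ∧ W 0 = 1 ∧ (∀ x : ℝ, (W x).im = 0) ∧
      (∀ z, deriv (deriv W) z = -(∑ i ∈ range (k + 2), (c' i : ℂ) * z ^ (2 * k + 2 * i)) * W z) ∧
      TendstoLocallyUniformlyOn w W atTop Set.univ := by
  have hci : ∀ i, Tendsto (fun n => c n i) atTop (𝓝 (c' i)) := fun i => (tendsto_pi_nhds.mp hlim) i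
  have hc' : ∀ i, |c' i| ≤ K := fun i => le_of_tendsto (hci i).abs (Eventually.of_forall fun n => hc n i)
  have hb : ∀ m, Tendsto (fun n => bb k (c n) m) atTop (𝓝 (bb k c' m)) := fun m =>
    ((bb_cont k m).tendsto c').comp hlim
  have hdom : ∀ R : ℝ, 1 ≤ R → ∃ C : ℝ, ∀ c : ℕ → ℝ, (∀ i, |c i| ≤ K) → ∀ m, |bb k c m| * R ^ m ≤ C * (1 / 2) ^ m := by
    intro R hR
    obtain ⟨C, hC⟩ := bb_bound k K (2 * R) hK (by linarith)
    refine ⟨C, fun c hc m => ?_⟩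
    have := hC c hc m
    rw [one_div, inv_pow, ← div_eq_mul_inv, le_div_iff₀ (by positivity)]
    calc _ = |bb k c m| * (2 * R) ^ m := by rw [mul_pow]; ring
      _ ≤ C := this
  have hsum : ∀ C : ℝ, Summable (fun m : ℕ => C * (1 / 2 : ℝ) ^ m) := fun C =>
    (summable_geometric_of_lt_one (by norm_num) (by norm_num)).mul_left C
  have hsumm : ∀ c : ℕ → ℝ, (∀ i, |c i| ≤ K) → ∀ z : ℂ, Summable (fun m => (bb k c m : ℂ) * z ^ m) := by
    intro c hc z
    obtain ⟨C, hC⟩ := hdom (max 1 ‖z‖) (le_max_left _ _)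
    refine Summable.of_norm_bounded (hsum C) (fun m => ?_)
    refine le_trans ?_ (hC c hc m)
    rw [norm_mul, norm_pow, norm_real, Real.norm_eq_abs]
    gcongr
    exact le_max_right _ _
  let W : ℂ → ℂ := fun z => ∑' m, (bb k c' m : ℂ) * z ^ m
  have hwn : ∀ n z, w n z = ∑' m, (bb k (c n) m : ℂ) * z ^ m := fun n z =>
    (taylor k (c n) (w n) (hw n) (h0 n) (h1 n) (hode n) z).tsum_eq.symm
  have hunif : TendstoLocallyUniformlyOn w W atTop Set.univ := by
    rw [tendstoLocallyUniformlyOn_iff_forall_isCompact isOpen_univ]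
    intro S _ hS
    obtain ⟨R0, hR0⟩ := hS.isBounded.exists_norm_le
    set R := max 1 R0
    obtain ⟨C, hC⟩ := hdom R (le_max_left _ _)
    have ht : Tendsto (fun n => ∑' m, |bb k (c n) m - bb k c' m| * R ^ m) atTop (𝓝 (∑' m : ℕ, (0 : ℝ))) := by
      apply tendsto_tsum_of_dominated_convergence (hsum (2 * C))
      · intro m
        have : Tendsto (fun n => |bb k (c n) m - bb k c' m| * R ^ m) atTop (𝓝 (|bb k c' m - bb k c' m| * R ^ m)) :=
          ((hb m).sub_const _).abs.mul_const _
        simpa using this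
      · refine Eventually.of_forall fun n m => ?_
        have e1 := hC (c n) (hc n) m
        have e2 := hC c' hc' m
        rw [Real.norm_of_nonneg (by positivity)]
        have e3 : |bb k (c n) m - bb k c' m| ≤ |bb k (c n) m| + |bb k c' m| := abs_sub _ _
        have e4 : |bb k (c n) m - bb k c' m| * R ^ m ≤ (|bb k (c n) m| + |bb k c' m|) * R ^ m := by gcongr
        linarith
    rw [tsum_zero] at ht
    rw [Metric.tendstoUniformlyOn_iff]
    intro ε hε
    filter_upwards [ht.eventually (gt_mem_nhds hε)] with n hn z hz
    refine lt_of_le_of_lt ?_ hn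
    rw [dist_comm, dist_eq_norm, hwn]
    simp only [W]
    rw [← (hsumm _ (hc n) z).tsum_sub (hsumm _ hc' z)]
    have hle : ∀ m, ‖(bb k (c n) m : ℂ) * z ^ m - (bb k c' m : ℂ) * z ^ m‖ ≤ |bb k (c n) m - bb k c' m| * R ^ m := by
      intro m
      rw [← sub_mul, norm_mul, norm_pow, ← ofReal_sub, norm_real, Real.norm_eq_abs]
      gcongr
      exact (hR0 z hz).trans (le_max_right _ _)
    have hs2 : Summable (fun m => |bb k (c n) m - bb k c' m| * R ^ m) := by
      refine Summable.of_norm_bounded (hsum (2 * C)) (fun m => ?_)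
      have e1 := hC (c n) (hc n) m
      have e2 := hC c' hc' m
      rw [Real.norm_of_nonneg (by positivity)]
      have e3 : |bb k (c n) m - bb k c' m| ≤ |bb k (c n) m| + |bb k c' m| := abs_sub _ _
      have e4 : |bb k (c n) m - bb k c' m| * R ^ m ≤ (|bb k (c n) m| + |bb k c' m|) * R ^ m := by gcongr
      linarith
    exact tsum_of_norm_bounded hs2.hasSum hle
  have hWd : Differentiable ℂ W := by
    rw [← differentiableOn_univ]
    exact hunif.differentiableOn (Eventually.of_forall fun n => (hw n).differentiableOn) isOpen_univ
  refine ⟨W, hWd, ?_, ?_, ?_, hunif⟩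
  · have h2 := hunif.tendsto_at (Set.mem_univ (0 : ℂ))
    simp only [h0] at h2
    exact tendsto_nhds_unique h2 tendsto_const_nhds
  · intro x
    have : W x = ((∑' m, bb k c' m * x ^ m : ℝ) : ℂ) := by
      simp only [W]; push_cast; rfl
    rw [this, ofReal_im]
  · intro z
    have d1 := hunif.deriv (Eventually.of_forall fun n => (hw n).differentiableOn) isOpen_univ
    have hdiff : ∀ n, Differentiable ℂ (deriv (w n)) := fun n => by
      rw [← differentiableOn_univ]
      exact (hw n).differentiableOn.deriv isOpen_univ
    have d2 := d1.deriv (Eventually.of_forall fun n => (hdiff n).differentiableOn) isOpen_univ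
    have t1 := d2.tendsto_at (Set.mem_univ z)
    simp only [Function.comp_apply, hode] at t1
    refine tendsto_nhds_unique t1 ?_
    apply Tendsto.mul _ (hunif.tendsto_at (Set.mem_univ z))
    apply Tendsto.neg
    apply tendsto_finsetSum
    intro i _
    exact ((continuous_ofReal.tendsto _).comp (hci i)).mul_const _

lemma hurwitz (w : ℕ → ℂ → ℂ) (W : ℂ → ℂ) (hw : ∀ n, Differentiable ℂ (w n)) (hW : Differentiable ℂ W)
    (h0 : W 0 = 1) (hz : ∀ n z, w n z = 0 → z.im = 0)
    (hunif : TendstoLocallyUniformlyOn w W atTop Set.univ) (z : ℂ) (hWz : W z = 0) : z.im = 0 := by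
  by_contra hne
  have han : AnalyticOnNhd ℂ W Set.univ := fun x _ => hW.analyticAt x
  have hiso : ∀ᶠ y in 𝓝[≠] z, W y ≠ 0 := by
    rcases (han z trivial).eventually_eq_zero_or_eventually_ne_zero with h | h
    · have h2 : W = fun _ => 0 := han.eq_of_eventuallyEq (fun x _ => analyticAt_const) h
      rw [h2] at h0
      exact absurd h0 (by simp)
    · exact h
  have him : ∀ᶠ y in 𝓝 z, y.im ≠ 0 := (isOpen_ne_fun continuous_im continuous_const).mem_nhds hne
  rw [eventually_nhdsWithin_iff] at hiso
  obtain ⟨r, hr, hball⟩ := Metric.eventually_nhds_iff_ball.mp (hiso.and him)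
  set ρ := r / 2 with hρ
  have hρ0 : 0 < ρ := by positivity
  have hsub : Metric.closedBall z ρ ⊆ Metric.ball z r := Metric.closedBall_subset_ball (by linarith)
  have hsph : ∀ y ∈ Metric.sphere z ρ, W y ≠ 0 := by
    intro y hy
    apply (hball y (hsub (Metric.sphere_subset_closedBall hy))).1
    intro h
    rw [Set.mem_singleton_iff.mp h] at hy
    simp at hy; linarith
  obtain ⟨y0, hy0, hmin⟩ := (isCompact_sphere z ρ).exists_isMinOn (NormedSpace.sphere_nonempty.mpr hρ0.le)
    hW.continuous.norm.continuousOn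
  set ε := ‖W y0‖ with hε
  have hε0 : 0 < ε := norm_pos_iff.mpr (hsph y0 hy0)
  have hu := (tendstoLocallyUniformlyOn_iff_forall_isCompact isOpen_univ).mp hunif (Metric.closedBall z ρ)
    (Set.subset_univ _) (isCompact_closedBall z ρ)
  rw [Metric.tendstoUniformlyOn_iff] at hu
  obtain ⟨n, hn⟩ := (hu (ε / 3) (by positivity)).exists
  have hnz : ∀ y ∈ Metric.closedBall z ρ, w n y ≠ 0 := fun y hy h =>
    (hball y (hsub hy)).2 (hz n y h)
  have hcl : closure (Metric.ball z ρ) = Metric.closedBall z ρ := closure_ball z hρ0.ne'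
  have hd : DiffContOnCl ℂ (fun y => (w n y)⁻¹) (Metric.ball z ρ) :=
    ((hw n).diffContOnCl).inv (fun y hy => hnz y (hcl ▸ hy))
  have hle := Complex.norm_le_of_forall_mem_frontier_norm_le Metric.isBounded_ball hd (C := (2 * ε / 3)⁻¹) (by
    intro y hy
    rw [frontier_ball z hρ0.ne'] at hy
    rw [norm_inv]
    apply inv_anti₀ (by positivity)
    have h1 := hn y (Metric.sphere_subset_closedBall hy)
    have h2 : ε ≤ ‖W y‖ := hmin hy
    rw [dist_eq_norm] at h1
    have h3 := norm_sub_norm_le (W y) (w n y)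
    linarith) (subset_closure (Metric.mem_ball_self hρ0))
  have h4 := hn z (Metric.mem_closedBall_self hρ0.le)
  rw [hWz, dist_zero_left] at h4
  rw [norm_inv] at hle
  have h5 : 0 < ‖w n z‖ := norm_pos_iff.mpr (hnz z (Metric.mem_closedBall_self hρ0.le))
  have h6 := (inv_le_inv₀ h5 (by positivity)).mp hle
  linarith

end Lim


namespace Lim
open Finset Filter Topology

lemma no_pos (ψ ψ' p : ℝ → ℝ) (X : ℝ) (h1 : ∀ x, HasDerivAt ψ (ψ' x) x) (h2 : ∀ x, HasDerivAt ψ' (-(p x) * ψ x) x)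
    (hp : ∀ x, X ≤ x → 1 ≤ p x) (hpos : ∀ x, X ≤ x → 0 < ψ x) : False := by
  let F : ℝ → ℝ := fun x => ψ' x * Real.sin (x - X) - ψ x * Real.cos (x - X)
  have hF : ∀ x, HasDerivAt F ((1 - p x) * ψ x * Real.sin (x - X)) x := by
    intro x
    have hs : HasDerivAt (fun x => Real.sin (x - X)) (Real.cos (x - X)) x := by
      simpa using ((hasDerivAt_id x).sub_const X).sin
    have hc : HasDerivAt (fun x => Real.cos (x - X)) (-Real.sin (x - X)) x := by
      simpa using ((hasDerivAt_id x).sub_const X).cos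
    refine (((h2 x).fun_mul hs).fun_sub ((h1 x).fun_mul hc)).congr_deriv ?_
    ring
  have hanti : AntitoneOn F (Set.Icc X (X + Real.pi)) := by
    apply antitoneOn_of_deriv_nonpos (convex_Icc _ _)
    · exact fun x _ => (hF x).continuousAt.continuousWithinAt
    · exact fun x _ => (hF x).differentiableAt.differentiableWithinAt
    · intro x hx
      rw [interior_Icc] at hx
      rw [(hF x).deriv]
      have hs : 0 ≤ Real.sin (x - X) := Real.sin_nonneg_of_nonneg_of_le_pi (by linarith [hx.1]) (by linarith [hx.2])
      have a := hp x hx.1.le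
      have b := hpos x hx.1.le
      have : (1 - p x) * ψ x ≤ 0 := by nlinarith
      nlinarith
  have hle := hanti (Set.left_mem_Icc.mpr (by linarith [Real.pi_pos])) (Set.right_mem_Icc.mpr (by linarith [Real.pi_pos]))
    (by linarith [Real.pi_pos])
  simp [F] at hle
  linarith [hpos X le_rfl, hpos (X + Real.pi) (by linarith [Real.pi_pos])]

lemma inf_zeros (k : ℕ) (c : ℕ → ℝ) (W : ℂ → ℂ) (hW : Differentiable ℂ W)
    (hre : ∀ x : ℝ, (W x).im = 0)
    (hode : ∀ z, deriv (deriv W) z = -(∑ i ∈ range (k + 2), (c i : ℂ) * z ^ (2 * k + 2 * i)) * W z)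
    (hc0 : ∀ i, i ≤ k → 0 ≤ c i) (hck : 1 ≤ c k) (hck1 : c (k + 1) = 0) : {z : ℂ | W z = 0}.Infinite := by
  intro hfin
  obtain ⟨B, hB⟩ := hfin.isBounded.exists_norm_le
  set X := max 1 (B + 1) with hX
  have hX1 : 1 ≤ X := le_max_left _ _
  have hnz : ∀ x : ℝ, X ≤ x → W x ≠ 0 := by
    intro x hx h
    have h1 := hB x h
    rw [norm_real, Real.norm_eq_abs] at h1
    have h2 := le_abs_self x
    have h3 : B + 1 ≤ X := le_max_right _ _
    linarith
  let φ : ℝ → ℝ := fun x => (W x).re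
  let φ' : ℝ → ℝ := fun x => (deriv W x).re
  let p : ℝ → ℝ := fun x => ∑ i ∈ range (k + 2), c i * x ^ (2 * k + 2 * i)
  have hW' : Differentiable ℂ (deriv W) := by
    rw [← differentiableOn_univ]
    exact hW.differentiableOn.deriv isOpen_univ
  have h1 : ∀ x, HasDerivAt φ (φ' x) x := fun x => ((hW x).hasDerivAt).real_of_complex
  have h2 : ∀ x, HasDerivAt φ' (-(p x) * φ x) x := by
    intro x
    refine (((hW' x).hasDerivAt).real_of_complex).congr_deriv ?_
    rw [hode]
    have : -(∑ i ∈ range (k + 2), (c i : ℂ) * (x : ℂ) ^ (2 * k + 2 * i)) = ((-(p x) : ℝ) : ℂ) := by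
      simp only [p]; push_cast; rfl
    rw [this, re_ofReal_mul]
  have hp : ∀ x, X ≤ x → 1 ≤ p x := by
    intro x hx
    have hx1 : 1 ≤ x := hX1.trans hx
    simp only [p]
    rw [sum_range_succ, hck1, zero_mul, add_zero, sum_range_succ]
    have h3 : 0 ≤ ∑ i ∈ range k, c i * x ^ (2 * k + 2 * i) := sum_nonneg fun i hi => by
      have := hc0 i (mem_range.mp hi).le
      positivity
    have h4 : 1 ≤ x ^ (2 * k + 2 * k) := one_le_pow₀ hx1
    nlinarith
  have hφ : ∀ x, X ≤ x → φ x ≠ 0 := by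
    intro x hx h
    apply hnz x hx
    exact Complex.ext h (hre x)
  have hφc : Continuous φ := by
    have := hW.continuous
    exact continuous_re.comp (this.comp continuous_ofReal)
  rcases lt_or_gt_of_ne (hφ X le_rfl) with hneg | hpos
  · refine no_pos (fun x => -φ x) (fun x => -φ' x) p X (fun x => (h1 x).fun_neg)
      (fun x => ((h2 x).fun_neg).congr_deriv (by ring)) hp ?_
    intro x hx
    by_contra hcon
    have hx0 : 0 ≤ φ x := by simp only [not_lt] at hcon; linarith
    obtain ⟨y, hy, hy0⟩ := intermediate_value_Icc hx hφc.continuousOn (show (0 : ℝ) ∈ Set.Icc (φ X) (φ x) from ⟨hneg.le, hx0⟩)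
    exact hφ y hy.1 hy0
  · refine no_pos φ φ' p X h1 h2 hp ?_
    intro x hx
    by_contra hcon
    push Not at hcon
    obtain ⟨y, hy, hy0⟩ := intermediate_value_Icc' hx hφc.continuousOn (show (0 : ℝ) ∈ Set.Icc (φ x) (φ X) from ⟨hcon, hpos.le⟩)
    exact hφ y hy.1 hy0

theorem main (k : ℕ) (hk : 1 ≤ k) :
    ∃ (c : ℕ → ℝ) (W : ℂ → ℂ), Differentiable ℂ W ∧ W 0 = 1 ∧ c k ≠ 0 ∧
      (∀ z, deriv (deriv W) z = -(∑ i ∈ range (k + 1), (c i : ℂ) * z ^ (2 * k + 2 * i)) * W z) ∧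
      {z : ℂ | W z = 0}.Infinite ∧ (∀ z, W z = 0 → z.im = 0) := by
  choose c w hwd h0 h1 hode hz hK hnn hsm hone using fun n : ℕ => Pts.part3 k hk (1 / ((n : ℝ) + 1)) (by positivity)
  have hcomp : IsCompact (Set.pi Set.univ (fun _ : ℕ => Set.Icc (-(8 * (k : ℝ) + 4)) (8 * k + 4))) :=
    isCompact_univ_pi fun _ => isCompact_Icc
  obtain ⟨c', -, φ, hφ, hlim⟩ := hcomp.tendsto_subseq (x := c) (fun n i _ => abs_le.mp (hK n i))
  have hci : ∀ i, Tendsto (fun n => c (φ n) i) atTop (𝓝 (c' i)) := fun i => (tendsto_pi_nhds.mp hlim) i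
  obtain ⟨W, hWd, hW0, hWre, hWode, hunif⟩ := limit_sol k (8 * k + 4) (by positivity) (c ∘ φ) (fun n => w (φ n))
    (fun n i => hK (φ n) i) (fun n => hwd _) (fun n => h0 _) (fun n => h1 _) (fun n z => hode (φ n) z) c' hlim
  have hc0 : ∀ i, i ≤ k → 0 ≤ c' i := fun i hi => ge_of_tendsto' (hci i) (fun n => hnn (φ n) i hi)
  have hck : 1 ≤ c' k := ge_of_tendsto' (hci k) (fun n => hone (φ n))
  have hck1 : c' (k + 1) = 0 := by
    refine tendsto_nhds_unique (hci (k + 1)) ?_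
    have ht : Tendsto (fun n => 1 / (((φ n : ℕ) : ℝ) + 1)) atTop (𝓝 0) :=
      tendsto_one_div_add_atTop_nhds_zero_nat.comp hφ.tendsto_atTop
    exact squeeze_zero_norm (fun n => hsm (φ n)) ht
  refine ⟨c', W, hWd, hW0, by linarith, ?_, inf_zeros k c' W hWd hWre hWode hc0 hck hck1,
    hurwitz (fun n => w (φ n)) W (fun n => hwd _) hWd hW0 (fun n => hz _) hunif⟩
  intro z
  rw [hWode, sum_range_succ, hck1]
  simp

end Lim


theorem stmt_1 (d : ℕ) (hd : 0 < d) (hd4 : 4 ∣ d) :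
    ∃ (P : Polynomial ℂ) (w : ℂ → ℂ), P.degree = (d : ℕ) ∧ (∀ n, (P.coeff n).im = 0) ∧ Differentiable ℂ w ∧ w ≠ 0 ∧
      (∀ z : ℂ, iteratedDeriv 2 w z + P.eval z * w z = 0) ∧ {z : ℂ | w z = 0}.Infinite ∧ (∀ z : ℂ, w z = 0 → z.im = 0) := by
  obtain ⟨k, rfl⟩ := hd4
  obtain ⟨c, W, hWd, hW0, hck, hode, hinf, hreal⟩ := Lim.main k (by omega)
  refine ⟨∑ i ∈ Finset.range (k + 1), Polynomial.C (c i : ℂ) * Polynomial.X ^ (2 * k + 2 * i), W, ?_, ?_, hWd, ?_, ?_, hinf, hreal⟩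
  · rw [Finset.sum_range_succ, Polynomial.degree_add_eq_right_of_degree_lt, Polynomial.degree_C_mul_X_pow]
    · congr 1; ring
    · simpa using hck
    · rw [Polynomial.degree_C_mul_X_pow _ (by simpa using hck)]
      refine (Polynomial.degree_sum_le _ _).trans_lt ?_
      rw [Finset.sup_lt_iff (WithBot.bot_lt_coe _)]
      intro i hi
      refine (Polynomial.degree_C_mul_X_pow_le _ _).trans_lt ?_
      have := Finset.mem_range.mp hi
      exact_mod_cast (by omega : 2 * k + 2 * i < 2 * k + 2 * k)
  · intro n
    rw [Polynomial.finsetSum_coeff, Complex.im_sum]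
    apply Finset.sum_eq_zero
    intro i _
    rw [Polynomial.coeff_C_mul_X_pow]
    split_ifs <;> simp
  · intro h
    rw [h] at hW0
    simp at hW0
  · intro z
    rw [iteratedDeriv_succ, iteratedDeriv_one, hode, Polynomial.eval_finsetSum]
    simp
end

section
/- Let P be a real polynomial over ℂ whose degree d is odd, and let w be a nonzero entire function satisfying w''(z) + P(z)·w(z) = 0 for all z ∈ ℂ such that every zero of w is real. Then the set {x : ℝ | w(x) = 0} is infinite and lies on a ray, i.e. it is either bounded above or bounded below as a subset of ℝ. -/
open Complex Polynomial

lemma real_unbdd (u u' p : ℝ → ℝ) (hu : ∀ x, HasDerivAt u (u' x) x)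
    (hu' : ∀ x, HasDerivAt u' (-(p x) * u x) x) (a : ℝ) (hpos : ∀ x, a ≤ x → 1 ≤ p x)
    (hup : ∀ x, a ≤ x → 0 < u x) : False := by
  have hW : ∀ x, HasDerivAt (fun x => u' x * Real.sin (x - a) - u x * Real.cos (x - a))
      ((1 - p x) * u x * Real.sin (x - a)) x := by
    intro x
    have h0 : HasDerivAt (fun x : ℝ => x - a) 1 x := (hasDerivAt_id x).sub_const a
    convert! ((hu' x).mul h0.sin).sub ((hu x).mul h0.cos) using 1
    ring
  have hanti : AntitoneOn (fun x => u' x * Real.sin (x - a) - u x * Real.cos (x - a))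
      (Set.Icc a (a + Real.pi)) := by
    apply antitoneOn_of_deriv_nonpos (convex_Icc _ _)
    · exact fun x _ => (hW x).continuousAt.continuousWithinAt
    · exact fun x _ => (hW x).differentiableAt.differentiableWithinAt
    · intro x hx
      rw [interior_Icc] at hx
      rw [(hW x).deriv]
      have h1 := hpos x hx.1.le
      have h2 := hup x hx.1.le
      have h3 := Real.sin_nonneg_of_nonneg_of_le_pi (x := x - a) (by linarith [hx.1])
        (by linarith [hx.2])
      have : 0 ≤ (p x - 1) * u x * Real.sin (x - a) :=
        mul_nonneg (mul_nonneg (by linarith) h2.le) h3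
      linarith
  have hpi := Real.pi_pos
  have := hanti (Set.left_mem_Icc.2 (by linarith)) (Set.right_mem_Icc.2 (by linarith))
    (by linarith)
  simp at this
  linarith [hup a le_rfl, hup (a + Real.pi) (by linarith)]

lemma real_zero (u u' p : ℝ → ℝ) (hu : ∀ x, HasDerivAt u (u' x) x)
    (hu' : ∀ x, HasDerivAt u' (-(p x) * u x) x) (a : ℝ) (hpos : ∀ x, a ≤ x → 1 ≤ p x) :
    ∃ x, a ≤ x ∧ u x = 0 := by
  by_contra! h
  have hc : Continuous u := continuous_iff_continuousAt.2 fun x => (hu x).continuousAt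
  have key : ∀ x, a ≤ x → 0 < u x * u a := by
    intro x hx
    by_contra! hn
    have : (0:ℝ) ∈ Set.uIcc (u a) (u x) := by
      rw [Set.mem_uIcc]
      rcases lt_or_gt_of_ne (h a le_rfl) with h1 | h1
      · left; exact ⟨h1.le, by nlinarith⟩
      · right; exact ⟨by nlinarith, h1.le⟩
    obtain ⟨y, hy, hy0⟩ := intermediate_value_uIcc hc.continuousOn this
    rw [Set.uIcc_of_le hx] at hy
    exact h y hy.1 hy0
  refine real_unbdd (fun x => u x * u a) (fun x => u' x * u a) p (fun x => (hu x).mul_const _)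
    (fun x => ?_) a hpos key
  convert! (hu' x).mul_const (u a) using 1
  ring

lemma real_case (u u' p : ℝ → ℝ) (hu : ∀ x, HasDerivAt u (u' x) x)
    (hu' : ∀ x, HasDerivAt u' (-(p x) * u x) x) (hne : ∀ x, u x = 0 → u' x ≠ 0)
    (a b : ℝ) (hpos : ∀ x, a ≤ x → 1 ≤ p x) (hneg : ∀ x, x ≤ b → p x ≤ 0) :
    {x | u x = 0}.Infinite ∧ BddBelow {x | u x = 0} := by
  constructor
  · intro hf
    obtain ⟨M, hM⟩ := hf.bddAbove
    obtain ⟨x, hx, hx0⟩ := real_zero u u' p hu hu' (max a (M + 1))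
      (fun x hx => hpos x ((le_max_left _ _).trans hx))
    have h1 := hM hx0
    have h2 := (le_max_right a (M+1)).trans hx
    linarith
  · by_cases hz : ∃ x ≤ b, u x = 0
    · obtain ⟨x₁, hx₁, h₁⟩ := hz
      refine ⟨x₁, fun x₂ (h₂ : u x₂ = 0) => ?_⟩
      by_contra! hlt
      have hd : ∀ x, HasDerivAt (fun x => u x * u' x) (u' x ^ 2 - p x * u x ^ 2) x := by
        intro x
        convert! (hu x).mul (hu' x) using 1
        ring
      have hm : MonotoneOn (fun x => u x * u' x) (Set.Icc x₂ x₁) := by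
        apply monotoneOn_of_deriv_nonneg (convex_Icc _ _)
        · exact fun x _ => (hd x).continuousAt.continuousWithinAt
        · exact fun x _ => (hd x).differentiableAt.differentiableWithinAt
        · intro x hx
          rw [interior_Icc] at hx
          rw [(hd x).deriv]
          have := hneg x (hx.2.le.trans hx₁)
          nlinarith [sq_nonneg (u' x), sq_nonneg (u x)]
      have hz : ∀ x ∈ Set.Icc x₂ x₁, u x * u' x = 0 := by
        intro x hx
        have e1 := hm (Set.left_mem_Icc.2 hlt.le) hx hx.1
        have e2 := hm hx (Set.right_mem_Icc.2 hlt.le) hx.2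
        simp only [h₁, h₂, zero_mul] at e1 e2
        linarith
      have hd2 : ∀ x, HasDerivAt (fun x => u x ^ 2) (2 * (u x * u' x)) x := by
        intro x
        convert! (hu x).pow 2 using 1
        simp; ring
      have hu0 : ∀ x ∈ Set.Icc x₂ x₁, u x = 0 := by
        have ha : AntitoneOn (fun x => u x ^ 2) (Set.Icc x₂ x₁) := by
          apply antitoneOn_of_deriv_nonpos (convex_Icc _ _)
          · exact fun x _ => (hd2 x).continuousAt.continuousWithinAt
          · exact fun x _ => (hd2 x).differentiableAt.differentiableWithinAt
          · intro x hx
            rw [(hd2 x).deriv, hz x (interior_subset hx), mul_zero]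
        intro x hx
        have := ha (Set.left_mem_Icc.2 hlt.le) hx hx.1
        simp only [h₂] at this
        nlinarith [sq_nonneg (u x)]
      have hmid : (x₂ + x₁) / 2 ∈ Set.Ioo x₂ x₁ := ⟨by linarith, by linarith⟩
      apply hne _ (hu0 _ ⟨hmid.1.le, hmid.2.le⟩)
      have he : u =ᶠ[nhds ((x₂ + x₁) / 2)] fun _ => 0 := by
        filter_upwards [Ioo_mem_nhds hmid.1 hmid.2] with x hx
        exact hu0 x ⟨hx.1.le, hx.2.le⟩
      exact (hu _).unique ((hasDerivAt_const _ _).congr_of_eventuallyEq he)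
    · push Not at hz
      exact ⟨b, fun x hx => by by_contra! h; exact hz x h.le hx⟩

lemma real_odd (Q : ℝ[X]) (hQ : Odd Q.natDegree) (u u' : ℝ → ℝ) (hu : ∀ x, HasDerivAt u (u' x) x)
    (hu' : ∀ x, HasDerivAt u' (-(Q.eval x) * u x) x) (hne : ∀ x, u x = 0 → u' x ≠ 0) :
    {x | u x = 0}.Infinite ∧ (BddAbove {x | u x = 0} ∨ BddBelow {x | u x = 0}) := by
  have tail : ∀ S : ℝ[X], Odd S.natDegree → 0 < S.leadingCoeff →
      ∃ a b : ℝ, (∀ x, a ≤ x → 1 ≤ S.eval x) ∧ (∀ x, x ≤ b → S.eval x ≤ 0) := by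
    intro S hS hl
    have hdeg : ∀ T : ℝ[X], T.natDegree = S.natDegree → 0 < T.degree := fun T hT =>
      natDegree_pos_iff_degree_pos.1 (hT ▸ hS.pos)
    have t1 := S.tendsto_atTop_of_leadingCoeff_nonneg (hdeg S rfl) hl.le
    have hnd : (-(S.comp (-X))).natDegree = S.natDegree := by
      rw [natDegree_neg, natDegree_comp]; simp
    have t2 := (-(S.comp (-X))).tendsto_atTop_of_leadingCoeff_nonneg (hdeg _ hnd) (by
      rw [leadingCoeff_neg, leadingCoeff_comp (by simp)]
      simp [hS.neg_one_pow, hl.le])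
    obtain ⟨a, ha⟩ := Filter.eventually_atTop.1 (t1.eventually_ge_atTop 1)
    obtain ⟨b, hb⟩ := Filter.eventually_atTop.1 (t2.eventually_ge_atTop 0)
    refine ⟨a, -b, ha, fun x hx => ?_⟩
    have := hb (-x) (by linarith)
    simpa using this
  have hQ0 : Q.leadingCoeff ≠ 0 := by
    rw [Ne, leadingCoeff_eq_zero]; rintro rfl; simp at hQ
  rcases lt_or_gt_of_ne hQ0 with h | h
  · have hnd : (Q.comp (-X)).natDegree = Q.natDegree := by
      rw [natDegree_comp]; simp
    obtain ⟨a, b, ha, hb⟩ := tail (Q.comp (-X)) (hnd ▸ hQ) (by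
      rw [leadingCoeff_comp (by simp)]; simp [hQ.neg_one_pow, h])
    obtain ⟨h1, h2⟩ := real_case (fun x => u (-x)) (fun x => - u' (-x))
      (fun x => (Q.comp (-X)).eval x)
      (fun x => by
        convert! (hu (-x)).comp x (hasDerivAt_neg x) using 1
        simp)
      (fun x => by
        have := ((hu' (-x)).comp x (hasDerivAt_neg x)).neg
        convert! this using 1
        simp)
      (fun x hx => by simpa using hne (-x) hx) a b ha hb
    have he : {x | u (-x) = 0} = -{x | u x = 0} := rfl
    rw [he] at h1 h2
    exact ⟨Set.infinite_neg.1 h1, Or.inl (bddBelow_neg.1 h2)⟩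
  · obtain ⟨a, b, ha, hb⟩ := tail Q hQ h
    obtain ⟨h1, h2⟩ := real_case u u' _ hu hu' hne a b ha hb
    exact ⟨h1, Or.inr h2⟩

lemma gron (y y' q : ℝ → ℂ) (a : ℂ) (K : ℝ) (hy : ∀ t, HasDerivAt y (a * y' t) t)
    (hy' : ∀ t, HasDerivAt y' (a * (q t * y t)) t)
    (hK : ∀ t ∈ Set.Icc (0:ℝ) 1, ‖a‖ * (1 + ‖q t‖) ≤ K) :
    ‖y 1‖ ≤ max ‖y 0‖ ‖y' 0‖ * Real.exp K := by
  have hd : ∀ t, HasDerivAt (fun t => (y t, y' t)) (a * y' t, a * (q t * y t)) t :=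
    fun t => (hy t).prodMk (hy' t)
  have := norm_le_gronwallBound_of_norm_deriv_right_le (f := fun t => (y t, y' t))
    (f' := fun t => (a * y' t, a * (q t * y t))) (δ := max ‖y 0‖ ‖y' 0‖) (K := K) (ε := 0)
    (a := 0) (b := 1)
    (fun t _ => (hd t).continuousAt.continuousWithinAt)
    (fun t _ => (hd t).hasDerivWithinAt) (by simp [Prod.norm_def]) (by
      intro t ht
      have h1 := hK t ⟨ht.1, ht.2.le⟩
      have hy1 : ‖y t‖ ≤ ‖(y t, y' t)‖ := norm_fst_le (y t, y' t)
      have hy2 : ‖y' t‖ ≤ ‖(y t, y' t)‖ := norm_snd_le (y t, y' t)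
      have hN := norm_nonneg (y t, y' t)
      have e : ‖a‖ * (1 + ‖q t‖) * ‖(y t, y' t)‖ ≤ K * ‖(y t, y' t)‖ := by gcongr
      refine (Prod.norm_def _).le.trans (max_le ?_ ?_)
      · simp only [norm_mul]
        have : ‖a‖ * ‖y' t‖ ≤ ‖a‖ * ‖(y t, y' t)‖ := by gcongr
        have : 0 ≤ ‖a‖ * ‖q t‖ * ‖(y t, y' t)‖ := by positivity
        linarith
      · simp only [norm_mul]
        have : ‖a‖ * (‖q t‖ * ‖y t‖) ≤ ‖a‖ * (‖q t‖ * ‖(y t, y' t)‖) := by gcongr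
        have : 0 ≤ ‖a‖ * ‖(y t, y' t)‖ := by positivity
        linarith) 1 (by simp)
  rw [gronwallBound_ε0] at this
  simp only [sub_zero, mul_one] at this
  exact (norm_fst_le (y 1, y' 1)).trans this

lemma poly_bound (P : ℂ[X]) : ∃ C : ℝ, 0 ≤ C ∧ ∀ z : ℂ, ∀ r : ℝ, ‖z‖ ≤ r →
    ‖P.eval z‖ ≤ C * (1 + r) ^ P.natDegree := by
  refine ⟨∑ i ∈ Finset.range (P.natDegree + 1), ‖P.coeff i‖,
    Finset.sum_nonneg fun _ _ => norm_nonneg _, fun z r hr => ?_⟩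
  rw [eval_eq_sum_range, Finset.sum_mul]
  refine (norm_sum_le _ _).trans (Finset.sum_le_sum fun i hi => ?_)
  rw [norm_mul, norm_pow]
  have h0 := norm_nonneg z
  gcongr
  calc ‖z‖ ^ i ≤ (1 + r) ^ i := by gcongr; linarith
    _ ≤ _ := pow_le_pow_right₀ (by linarith) (by simp at hi; omega)

lemma ray_bound (P : ℂ[X]) (w : ℂ → ℂ) (hw : Differentiable ℂ w)
    (hde : ∀ z : ℂ, deriv (deriv w) z = - (P.eval z * w z)) (z₀ : ℂ) :
    ∃ C : ℝ, 0 ≤ C ∧ ∀ z, ‖w z‖ ≤ max ‖w z₀‖ ‖deriv w z₀‖ *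
      Real.exp (‖z - z₀‖ * (1 + C * (1 + (‖z₀‖ + ‖z - z₀‖)) ^ P.natDegree)) := by
  obtain ⟨C, hC, hb⟩ := poly_bound P
  refine ⟨C, hC, fun z => ?_⟩
  have hl : ∀ t : ℝ, HasDerivAt (fun t : ℝ => z₀ + t * (z - z₀)) (z - z₀) t := by
    intro t
    have := ((hasDerivAt_id t).ofReal_comp.mul_const (z - z₀)).const_add z₀
    simpa using this
  have hw' : Differentiable ℂ (deriv w) := hw.deriv
  have := gron (fun t => w (z₀ + t * (z - z₀))) (fun t => deriv w (z₀ + t * (z - z₀)))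
    (fun t => - P.eval (z₀ + t * (z - z₀))) (z - z₀)
    (‖z - z₀‖ * (1 + C * (1 + (‖z₀‖ + ‖z - z₀‖)) ^ P.natDegree))
    (fun t => by
      have := (hw _).hasDerivAt.comp t (hl t)
      rwa [mul_comm] at this)
    (fun t => by
      have := (hw' _).hasDerivAt.comp t (hl t)
      rw [hde, mul_comm] at this
      convert! this using 1
      ring)
    (fun t ht => by
      rw [norm_neg]
      gcongr
      apply hb
      refine (norm_add_le _ _).trans ?_
      rw [norm_mul, norm_real, Real.norm_of_nonneg ht.1]
      have := mul_le_of_le_one_left (norm_nonneg (z - z₀)) ht.2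
      linarith)
  simpa using this

lemma ode_unique (P : ℂ[X]) (w : ℂ → ℂ) (hw : Differentiable ℂ w)
    (hde : ∀ z : ℂ, deriv (deriv w) z = - (P.eval z * w z)) (z₀ : ℂ) (h0 : w z₀ = 0)
    (h1 : deriv w z₀ = 0) (z : ℂ) : w z = 0 := by
  obtain ⟨C, -, h⟩ := ray_bound P w hw hde z₀
  have := h z
  simpa [h0, h1] using this

/-- An entire function of polynomial growth is a polynomial. -/
lemma poly_of_growth (g : ℂ → ℂ) (hg : Differentiable ℂ g) (C : ℝ) (N : ℕ) 
    (h : ∀ r : ℝ, 1 ≤ r → ∀ z, ‖z‖ = r → ‖g z‖ ≤ C * r ^ N) : ∃ Q : ℂ[X], ∀ z, g z = Q.eval z := by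
  have hz : ∀ n, N < n → iteratedDeriv n g 0 = 0 := by
    intro n hn
    by_contra hne
    have hp := norm_pos_iff.2 hne
    have hC : 0 ≤ C := by
      have := (norm_nonneg _).trans (h 1 le_rfl 1 (by simp)); simpa using this
    have key : ∀ r : ℝ, 1 ≤ r → ‖iteratedDeriv n g 0‖ * r ≤ n.factorial * C := by
      intro r hr
      have hr0 : 0 < r := by linarith
      have := norm_iteratedDeriv_le_of_forall_mem_sphere_norm_le (c := 0) (R := r)
        (C := C * r ^ N) n hr0 hg.diffContOnCl (fun z hz => h r hr z (by simpa using hz))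
      rw [le_div_iff₀ (by positivity)] at this
      have h2 : r ^ N * r ≤ r ^ n := by
        rw [← pow_succ]; exact pow_le_pow_right₀ hr hn
      have h3 : (‖iteratedDeriv n g 0‖ * r) * r ^ N ≤ (n.factorial * C) * r ^ N := by
        calc _ = ‖iteratedDeriv n g 0‖ * (r ^ N * r) := by ring
          _ ≤ ‖iteratedDeriv n g 0‖ * r ^ n := by gcongr
          _ ≤ _ := by linarith
      exact le_of_mul_le_mul_right h3 (by positivity)
    have := key (n.factorial * C / ‖iteratedDeriv n g 0‖ + 1) (by
      have : 0 ≤ n.factorial * C / ‖iteratedDeriv n g 0‖ := by positivity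
      linarith)
    rw [mul_add, mul_div_cancel₀ _ hp.ne'] at this
    linarith
  refine ⟨∑ n ∈ Finset.range (N + 1), Polynomial.C ((n.factorial : ℂ)⁻¹ * iteratedDeriv n g 0) * X ^ n,
    fun z => ?_⟩
  rw [← Complex.taylorSeries_eq_of_entire' 0 z hg]
  rw [tsum_eq_sum (s := Finset.range (N + 1)), eval_finsetSum]
  · simp
  · intro n hn
    rw [hz n (by simp at hn; omega)]; simp

lemma has_zero (P : ℂ[X]) (hP : Odd P.natDegree) (w : ℂ → ℂ) (hw : Differentiable ℂ w)
    (hde : ∀ z : ℂ, deriv (deriv w) z = - (P.eval z * w z)) : ∃ z, w z = 0 := by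
  by_contra! hne
  have hw' : Differentiable ℂ (deriv w) := hw.deriv
  have hh : Differentiable ℂ (fun z => deriv w z / w z) := hw'.div hw hne
  obtain ⟨g, hg⟩ := (hh.isExactOn_univ).with_val_at 0 (log (w 0))
  obtain ⟨hg0, hg⟩ := hg
  have hg' : ∀ z, HasDerivAt g (deriv w z / w z) z := fun z => hg z trivial
  have hgd : Differentiable ℂ g := fun z => (hg' z).differentiableAt
  have hexp : ∀ z, exp (g z) = w z := by
    have hd : ∀ z, HasDerivAt (fun z => exp (-g z) * w z) 0 z := by
      intro z
      convert! (hg' z).neg.cexp.mul (hw z).hasDerivAt using 1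
      have := hne z
      simp only [Pi.neg_apply]
      field_simp
      ring
    intro z
    have := is_const_of_deriv_eq_zero (fun z => (hd z).differentiableAt) (fun z => (hd z).deriv) z 0
    simp only [hg0, exp_neg, exp_log (hne 0)] at this
    rw [inv_mul_cancel₀ (hne 0)] at this
    field_simp at this
    exact this.symm
  obtain ⟨C, hC, hb⟩ := ray_bound P w hw hde 0
  set A := max ‖w 0‖ ‖deriv w 0‖ with hA
  have hA0 : 0 < A := (norm_pos_iff.2 (hne 0)).trans_le (le_max_left _ _)
  set d := P.natDegree with hd
  have hre : ∀ r : ℝ, 1 ≤ r → ∀ z, ‖z‖ ≤ r → (g z).re ≤ (1 + |Real.log A| + C * 2 ^ d) * r ^ (d + 1) := by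
    intro r hr z hz
    have h1 := hb z
    rw [← hexp, norm_exp, ← Real.exp_log hA0, ← Real.exp_add, Real.exp_le_exp] at h1
    simp only [sub_zero, norm_zero, zero_add] at h1
    have h2 : ‖z‖ * (1 + C * (1 + ‖z‖) ^ d) ≤ r * (1 + C * (2 * r) ^ d) := by
      gcongr; linarith
    have h3 : r ≤ r ^ (d + 1) := le_self_pow₀ hr (by omega)
    have h4 : 1 ≤ r ^ (d + 1) := one_le_pow₀ hr
    have h5 : |Real.log A| ≤ |Real.log A| * r ^ (d+1) := le_mul_of_one_le_right (abs_nonneg _) h4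
    have h6 : r * (1 + C * (2 * r) ^ d) = r + C * 2 ^ d * r ^ (d + 1) := by
      rw [mul_pow]; ring
    have := le_abs_self (Real.log A)
    linarith
  set B := (1 + |Real.log A| + C * 2 ^ d) with hB
  have hB0 : 0 < B := by positivity
  obtain ⟨Q, hQ⟩ := poly_of_growth g hgd (2 * (B * 2 ^ (d + 1)) + 3 * ‖g 0‖) (d + 1) (by
    intro r hr z hz
    have hr0 : 0 < r := by linarith
    have := borelCaratheodory (f := g) (M := B * (2 * r) ^ (d + 1)) (R := 2 * r) (z := z)
      (by positivity) hgd.differentiableOn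
      (fun x hx => hre (2 * r) (by linarith) x (by simpa using (mem_ball_zero_iff.1 hx).le))
      (by linarith) (by rw [mem_ball_zero_iff]; linarith)
    refine this.trans ?_
    rw [hz]
    have e1 : 2 * (B * (2 * r) ^ (d + 1)) * r / (2 * r - r) = 2 * (B * 2 ^ (d + 1)) * r ^ (d + 1) := by
      rw [mul_pow]; field_simp; ring
    have e2 : ‖g 0‖ * (2 * r + r) / (2 * r - r) = 3 * ‖g 0‖ := by
      field_simp; ring
    rw [e1, e2, add_mul]
    have h4 : 1 ≤ r ^ (d + 1) := one_le_pow₀ hr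
    have h5 : 3 * ‖g 0‖ ≤ 3 * ‖g 0‖ * r ^ (d + 1) := le_mul_of_one_le_right (by positivity) h4
    linarith)
  have hgQ : g = fun z => Q.eval z := funext hQ
  have hwd : deriv w = fun z => Q.derivative.eval z * w z := by
    funext z
    have h1 := hg' z
    rw [hgQ] at h1
    have := h1.unique (Q.hasDerivAt z)
    rw [← this]
    have := hne z
    field_simp
  have hPQ : P = -(derivative (derivative Q) + derivative Q ^ 2) := by
    apply Polynomial.funext
    intro z
    have h1 := (Q.derivative.hasDerivAt z).mul (hw z).hasDerivAt
    have h2 := hde z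
    rw [hwd] at h2
    have h3 := h1.deriv
    rw [hwd] at h3
    have h4 : (derivative (derivative Q)).eval z * w z + Q.derivative.eval z * (Q.derivative.eval z * w z)
        = - (P.eval z * w z) := by rw [← h2, ← h3]; rfl
    have : (P.eval z + (derivative (derivative Q)).eval z + Q.derivative.eval z ^ 2) * w z = 0 := by
      linear_combination h4
    have := (mul_eq_zero.1 this).resolve_right (hne z)
    simp only [eval_neg, eval_add, eval_pow]
    linear_combination this
  by_cases hm : (derivative Q).natDegree = 0
  · obtain ⟨c, hc⟩ := natDegree_eq_zero.1 hm
    rw [← hc] at hPQ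
    have : P.natDegree = 0 := by rw [hPQ, ← C_pow]; simp
    rw [hd, this] at hP
    simp at hP
  · have hlt : (derivative (derivative Q)).natDegree < (derivative Q ^ 2).natDegree := by
      rw [natDegree_pow]
      have := natDegree_derivative_lt hm
      omega
    have : P.natDegree = 2 * (derivative Q).natDegree := by
      rw [hPQ, natDegree_neg, natDegree_add_eq_right_of_natDegree_lt hlt, natDegree_pow]
    rw [hd, this] at hP
    exact (Nat.not_odd_iff_even.2 (even_two_mul _)) hP

theorem stmt_4 (P : Polynomial ℂ) (hP : Odd P.natDegree)
    (hreal : ∀ n, (P.coeff n).im = 0)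
    (w : ℂ → ℂ) (hw : Differentiable ℂ w) (hw0 : w ≠ 0)
    (hde : ∀ z : ℂ, iteratedDeriv 2 w z + P.eval z * w z = 0)
    (hzeros : ∀ z : ℂ, w z = 0 → z.im = 0) :
    {x : ℝ | w x = 0}.Infinite ∧
      (BddAbove {x : ℝ | w x = 0} ∨ BddBelow {x : ℝ | w x = 0}) := by
  have hde' : ∀ z : ℂ, deriv (deriv w) z = - (P.eval z * w z) := by
    intro z
    have := hde z
    rw [iteratedDeriv_succ, iteratedDeriv_one] at this
    linear_combination this
  have hw' : Differentiable ℂ (deriv w) := hw.deriv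
  have hsimple : ∀ z, w z = 0 → deriv w z ≠ 0 := fun z h0 h1 =>
    hw0 (funext fun y => ode_unique P w hw hde' z h0 h1 y)
  obtain ⟨z₀, hz₀⟩ := has_zero P hP w hw hde'
  have him := hzeros z₀ hz₀
  obtain ⟨x₀, rfl⟩ : ∃ x : ℝ, (x : ℂ) = z₀ := ⟨z₀.re, by apply Complex.ext <;> simp [him]⟩
  set c := deriv w x₀ with hc
  have hc0 : c ≠ 0 := hsimple _ hz₀
  obtain ⟨Q, hQ⟩ : ∃ Q : ℝ[X], Q.map ofRealHom = P := by
    have : P ∈ lifts ofRealHom := by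
      rw [lifts_iff_coeff_lifts]
      intro n
      exact ⟨(P.coeff n).re, by apply Complex.ext <;> simp [hreal n]⟩
    exact (mem_lifts P).1 this
  have hQd : Odd Q.natDegree := by rwa [← hQ, natDegree_map] at hP
  have hQe : ∀ x : ℝ, P.eval (x : ℂ) = (Q.eval x : ℝ) := by
    intro x
    rw [← hQ]
    exact eval_map_apply (f := ofRealHom) x
  -- derivatives on the real line
  have hr : ∀ (f : ℂ → ℂ), Differentiable ℂ f → ∀ x : ℝ,
      HasDerivAt (fun x : ℝ => f x / c) (deriv f x / c) x := fun f hf x =>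
    ((hf x).hasDerivAt.comp_ofReal).div_const c
  have hre : ∀ (f : ℝ → ℂ) (f' : ℂ) (x : ℝ), HasDerivAt f f' x →
      HasDerivAt (fun x => (f x).re) f'.re x := fun f f' x h => by
    exact (reCLM.hasFDerivAt.comp_hasDerivAt x h)
  have him : ∀ (f : ℝ → ℂ) (f' : ℂ) (x : ℝ), HasDerivAt f f' x →
      HasDerivAt (fun x => (f x).im) f'.im x := fun f f' x h => by
    exact (imCLM.hasFDerivAt.comp_hasDerivAt x h)
  have hdd : ∀ x : ℝ, deriv (deriv w) x / c = ((-(Q.eval x) : ℝ) : ℂ) * (w x / c) := by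
    intro x
    rw [hde', hQe]; push_cast; ring
  -- the normalised solution is real on the real line
  have hv : ∀ x : ℝ, (w x / c).im = 0 := by
    intro x
    obtain ⟨K, hK⟩ := (isCompact_Icc (a := (0:ℝ)) (b := 1)).exists_bound_of_continuousOn
      (f := fun t : ℝ => Q.eval (x₀ + t * (x - x₀))) (by fun_prop)
    have hl : ∀ t : ℝ, HasDerivAt (fun t : ℝ => x₀ + t * (x - x₀)) (x - x₀) t := by
      intro t
      have := ((hasDerivAt_id t).mul_const (x - x₀)).const_add x₀
      simpa using this
    have := gron (fun t => ((w ((x₀ + t * (x - x₀) : ℝ) : ℂ) / c).im : ℝ))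
      (fun t => ((deriv w ((x₀ + t * (x - x₀) : ℝ) : ℂ) / c).im : ℝ))
      (fun t => ((-Q.eval (x₀ + t * (x - x₀)) : ℝ) : ℂ)) ((x - x₀ : ℝ) : ℂ)
      (‖((x - x₀ : ℝ) : ℂ)‖ * (1 + K))
      (fun t => by
        have := ((him _ _ _ (hr w hw (x₀ + t * (x - x₀)))).comp t (hl t)).ofReal_comp
        convert! this using 1
        push_cast; ring)
      (fun t => by
        have := ((him _ _ _ (hr _ hw' (x₀ + t * (x - x₀)))).comp t (hl t)).ofReal_comp
        rw [hdd, im_ofReal_mul] at this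
        convert! this using 1
        push_cast; ring)
      (fun t ht => by
        gcongr
        rw [norm_real, norm_neg]
        exact hK t ht)
    have hcc : deriv w x₀ / c = 1 := div_self hc0
    simpa [hz₀, hcc] using this
  have hvd : ∀ x : ℝ, (deriv w x / c).im = 0 := by
    intro x
    have h1 := him _ _ _ (hr w hw x)
    simp only [hv] at h1
    exact h1.unique (hasDerivAt_const x 0)
  have hset : {x : ℝ | w x = 0} = {x : ℝ | (w x / c).re = 0} := by
    ext x
    simp only [Set.mem_ofPred_eq]
    constructor
    · intro h; simp [h]
    · intro h
      have : w x / c = 0 := Complex.ext h (hv x)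
      exact (div_eq_zero_iff.1 this).resolve_right hc0
  rw [hset]
  refine real_odd Q hQd _ (fun x => (deriv w x / c).re) (fun x => hre _ _ _ (hr w hw x))
    (fun x => ?_) (fun x hx hx' => ?_)
  · have := hre _ _ _ (hr _ hw' x)
    rwa [hdd, re_ofReal_mul] at this
  · have hx0 : x ∈ {x : ℝ | w x = 0} := by rw [hset]; exact hx
    have : deriv w x / c = 0 := Complex.ext hx' (hvd x)
    exact hsimple _ hx0 ((div_eq_zero_iff.1 this).resolve_right hc0)
end

section
/- Let P be a real polynomial over ℂ whose degree d is odd, and let w be a nonzero entire function satisfying w''(z) + P(z)·w(z) = 0 for all z ∈ ℂ such that all but finitely many zeros of w are real (i.e. the set {z : ℂ | w(z) = 0 and Im(z) ≠ 0} is finite). Then the set of zeros of w is infinite and the set {x : ℝ | w(x) = 0} is either bounded above or bounded below as a subset of ℝ. -/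
open Complex Polynomial

namespace Stmt6

lemma hasDeriv_deriv (P : Polynomial ℂ) (w : ℂ → ℂ) (hw : Differentiable ℂ w)
    (hde : ∀ z : ℂ, iteratedDeriv 2 w z + P.eval z * w z = 0) (z : ℂ) :
    HasDerivAt (deriv w) (-(P.eval z * w z)) z := by
  have h1 : Differentiable ℂ (deriv w) := hw.deriv
  have h2 := (h1 z).hasDerivAt
  have h3 := hde z
  rw [iteratedDeriv_succ, iteratedDeriv_one] at h3
  rwa [eq_neg_of_add_eq_zero_left h3] at h2

lemma gron (P : Polynomial ℂ) (w : ℂ → ℂ) (hw : Differentiable ℂ w)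
    (hd : ∀ z : ℂ, HasDerivAt (deriv w) (-(P.eval z * w z)) z) (a z : ℂ) (K : ℝ) (hK1 : 1 ≤ K)
    (hK : ∀ t ∈ Set.Icc (0:ℝ) 1, ‖P.eval (a + t * (z - a))‖ ≤ K) :
    ‖w z‖ ≤ max ‖w a‖ ‖deriv w a‖ * Real.exp (K * ‖z - a‖) := by
  have hγ : ∀ t : ℝ, HasDerivAt (fun t : ℝ => a + (t:ℂ) * (z - a)) (z - a) t := by
    intro t
    have := ((Complex.ofRealCLM.hasDerivAt (x := t)).mul_const (z - a)).const_add a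
    simpa using this
  have hF : ∀ t : ℝ, HasDerivAt
      (fun t : ℝ => (w (a + (t:ℂ) * (z - a)), deriv w (a + (t:ℂ) * (z - a))))
      (deriv w (a + (t:ℂ) * (z - a)) * (z - a),
        -(P.eval (a + (t:ℂ) * (z - a)) * w (a + (t:ℂ) * (z - a))) * (z - a)) t := by
    intro t
    exact ((hw _).hasDerivAt.comp t (hγ t)).prodMk ((hd _).comp t (hγ t))
  have := norm_le_gronwallBound_of_norm_deriv_right_le (a := 0) (b := 1)
    (δ := max ‖w a‖ ‖deriv w a‖) (K := K * ‖z - a‖) (ε := 0)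
    (fun t _ => (hF t).continuousAt.continuousWithinAt)
    (fun t _ => (hF t).hasDerivWithinAt) (by simp [Prod.norm_def])
    (by
      intro t ht
      have hk := hK t ⟨ht.1, ht.2.le⟩
      simp only [Prod.norm_def, norm_mul, norm_neg, add_zero]
      set A := ‖w (a + (t:ℂ) * (z - a))‖
      set B := ‖deriv w (a + (t:ℂ) * (z - a))‖
      have hA : 0 ≤ A := norm_nonneg _
      have hB : 0 ≤ B := norm_nonneg _
      have e : K * ‖z - a‖ * max A B = (K * max A B) * ‖z - a‖ := by ring
      rw [e]
      apply max_le
      · gcongr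
        calc B ≤ max A B := le_max_right _ _
          _ = 1 * max A B := by ring
          _ ≤ K * max A B := by gcongr
      · gcongr
        exact le_max_left _ _)
    1 (by simp)
  simp only [ofReal_one, one_mul, add_sub_cancel, sub_zero, gronwallBound_ε0, mul_one] at this
  exact (le_max_left _ _).trans this

lemma poly_bound (P : Polynomial ℂ) : ∃ C : ℝ, 1 ≤ C ∧
    ∀ z, ‖P.eval z‖ ≤ C * (1 + ‖z‖) ^ P.natDegree := by
  refine ⟨1 + ∑ i ∈ Finset.range (P.natDegree + 1), ‖P.coeff i‖,
    by have := Finset.sum_nonneg (s := Finset.range (P.natDegree + 1)) (f := fun i => ‖P.coeff i‖) (fun i _ => norm_nonneg _); linarith, ?_⟩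
  intro z
  have h1 : (1:ℝ) ≤ 1 + ‖z‖ := by have := norm_nonneg z; linarith
  calc ‖P.eval z‖ ≤ ∑ i ∈ Finset.range (P.natDegree + 1), ‖P.coeff i‖ * (1 + ‖z‖) ^ P.natDegree := by
        rw [eval_eq_sum_range]
        refine (norm_sum_le _ _).trans (Finset.sum_le_sum ?_)
        intro i hi
        rw [norm_mul, norm_pow]
        gcongr
        calc ‖z‖ ^ i ≤ (1 + ‖z‖) ^ i := by gcongr; linarith
          _ ≤ _ := pow_le_pow_right₀ h1 (by simp at hi; omega)
    _ = (∑ i ∈ Finset.range (P.natDegree + 1), ‖P.coeff i‖) * (1 + ‖z‖) ^ P.natDegree := by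
        rw [Finset.sum_mul]
    _ ≤ _ := by gcongr; linarith

lemma uniq (P : Polynomial ℂ) (w : ℂ → ℂ) (hw : Differentiable ℂ w)
    (hd : ∀ z : ℂ, HasDerivAt (deriv w) (-(P.eval z * w z)) z) (a : ℂ) (h0 : w a = 0)
    (h1 : deriv w a = 0) : w = 0 := by
  obtain ⟨C, hC, hb⟩ := poly_bound P
  funext z
  have := gron P w hw hd a z (C * (1 + (‖a‖ + ‖z - a‖)) ^ P.natDegree)
    (one_le_mul_of_one_le_of_one_le hC (one_le_pow₀ (by linarith [norm_nonneg a, norm_nonneg (z-a)])))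
    (by
      intro t ht
      refine (hb _).trans ?_
      gcongr
      refine (norm_add_le _ _).trans ?_
      gcongr
      rw [norm_mul, norm_real, Real.norm_of_nonneg ht.1]
      exact mul_le_of_le_one_left (norm_nonneg _) ht.2)
  simpa [h0, h1] using this

/-- Finite-order growth. -/
def Growth (w : ℂ → ℂ) : Prop := ∃ C : ℝ, ∃ N : ℕ, ∀ z, ‖w z‖ ≤ Real.exp (C * (1 + ‖z‖) ^ N)

lemma growth (P : Polynomial ℂ) (w : ℂ → ℂ) (hw : Differentiable ℂ w)
    (hd : ∀ z : ℂ, HasDerivAt (deriv w) (-(P.eval z * w z)) z) : Growth w := by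
  obtain ⟨C, hC, hb⟩ := poly_bound P
  set M := max ‖w 0‖ ‖deriv w 0‖
  have hM : 0 ≤ M := (norm_nonneg _).trans (le_max_left _ _)
  refine ⟨M + C, P.natDegree + 1, fun z => ?_⟩
  have h1 : (1:ℝ) ≤ 1 + ‖z‖ := by have := norm_nonneg z; linarith
  have := gron P w hw hd 0 z (C * (1 + ‖z‖) ^ P.natDegree)
    (one_le_mul_of_one_le_of_one_le hC (one_le_pow₀ h1))
    (by
      intro t ht
      refine (hb _).trans ?_
      gcongr
      simp only [sub_zero, zero_add]
      rw [norm_mul, norm_real, Real.norm_of_nonneg ht.1]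
      exact mul_le_of_le_one_left (norm_nonneg _) ht.2)
  refine this.trans ?_
  calc _ ≤ Real.exp M * Real.exp (C * (1 + ‖z‖) ^ P.natDegree * ‖z - 0‖) := by
        gcongr
        have := Real.add_one_le_exp M
        change M ≤ _
        linarith
    _ = Real.exp (M * 1 + C * (1 + ‖z‖) ^ P.natDegree * ‖z‖) := by rw [← Real.exp_add]; simp
    _ ≤ _ := by
        gcongr
        rw [add_mul]
        have : (1:ℝ) ≤ (1 + ‖z‖) ^ (P.natDegree + 1) := one_le_pow₀ h1
        apply add_le_add
        · gcongr
        · rw [pow_succ, ← mul_assoc]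
          gcongr
          linarith

lemma growth_dslope (w : ℂ → ℂ) (a : ℂ) (ha : w a = 0) (hg : Growth w)
    (hc : Continuous (dslope w a)) : Growth (dslope w a) := by
  obtain ⟨C, N, h⟩ := hg
  obtain ⟨M, hM⟩ := (isCompact_closedBall a 1).exists_bound_of_continuousOn hc.continuousOn
  refine ⟨max (max C M) 0, N, fun z => ?_⟩
  have h1 : (1:ℝ) ≤ (1 + ‖z‖) ^ N := one_le_pow₀ (by have := norm_nonneg z; linarith)
  by_cases hz : ‖z - a‖ ≤ 1
  · refine (hM z (by simpa [dist_eq_norm] using hz)).trans ?_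
    calc M ≤ max (max C M) 0 := (le_max_right _ _).trans (le_max_left _ _)
      _ ≤ max (max C M) 0 * (1 + ‖z‖) ^ N := le_mul_of_one_le_right (le_max_right _ _) h1
      _ ≤ _ := by have := Real.add_one_le_exp (max (max C M) 0 * (1 + ‖z‖) ^ N); linarith
  · push Not at hz
    have e := sub_smul_dslope_of_zero ha z
    have : ‖dslope w a z‖ ≤ ‖w z‖ := by
      rw [← e, norm_smul]
      exact le_mul_of_one_le_left (norm_nonneg _) hz.le
    refine (this.trans (h z)).trans ?_
    gcongr
    exact (le_max_left _ _).trans (le_max_left _ _)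

lemma factor (S : Finset ℂ) : ∀ w : ℂ → ℂ, Differentiable ℂ w → Growth w →
    (∀ z, w z = 0 → z ∈ S) → (∀ z, w z = 0 → deriv w z ≠ 0) →
    ∃ Q : Polynomial ℂ, Q ≠ 0 ∧ ∃ f : ℂ → ℂ, Differentiable ℂ f ∧ Growth f ∧ (∀ z, f z ≠ 0) ∧
      ∀ z, w z = Q.eval z * f z := by
  induction S using Finset.induction_on with
  | empty =>
    intro w hw hg h0 _
    exact ⟨1, one_ne_zero, w, hw, hg, fun z hz => by simpa using h0 z hz, fun z => by simp⟩
  | insert a S haS ih =>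
    intro w hw hg h0 h1
    by_cases ha : w a = 0
    · have hdiff : Differentiable ℂ (dslope w a) := by
        rw [← differentiableOn_univ, differentiableOn_dslope Filter.univ_mem]
        exact hw.differentiableOn
      have e : ∀ z, w z = (z - a) * dslope w a z := fun z => by
        have := sub_smul_dslope_of_zero ha z
        simpa using this.symm
      obtain ⟨Q, hQ, f, hf, hfg, hf0, hfe⟩ := ih (dslope w a) hdiff
        (growth_dslope w a ha hg hdiff.continuous)
        (by
          intro z hz
          have hwz : w z = 0 := by rw [e, hz, mul_zero]
          rcases Finset.mem_insert.1 (h0 z hwz) with h | h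
          · subst h
            rw [dslope_same] at hz
            exact absurd hz (h1 _ hwz)
          · exact h)
        (by
          intro z hz hz'
          have hwz : w z = 0 := by rw [e, hz, mul_zero]
          apply h1 z hwz
          have hD : HasDerivAt w (1 * dslope w a z + (z - a) * deriv (dslope w a) z) z := by
            have := ((hasDerivAt_id z).sub_const a).mul (hdiff z).hasDerivAt
            refine this.congr_of_eventuallyEq (Filter.Eventually.of_forall ?_)
            intro y
            simp [e y]
          rw [hD.deriv, hz, hz']
          simp)
      refine ⟨(X - C a) * Q, mul_ne_zero (X_sub_C_ne_zero a) hQ, f, hf, hfg, hf0, fun z => ?_⟩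
      rw [e, hfe]
      simp [mul_assoc]
    · apply ih w hw hg _ h1
      intro z hz
      rcases Finset.mem_insert.1 (h0 z hz) with h | h
      · subst h; exact absurd hz ha
      · exact h

lemma exists_log (f : ℂ → ℂ) (hf : Differentiable ℂ f) (h0 : ∀ z, f z ≠ 0) :
    ∃ g : ℂ → ℂ, Differentiable ℂ g ∧ ∀ z, f z = exp (g z) := by
  have hdiff : Differentiable ℂ (fun z => deriv f z / f z) := hf.deriv.div hf h0
  obtain ⟨g, hg0, hg⟩ := hdiff.isExactOn_univ.with_val_at 0 (log (f 0))
  have hg' : ∀ z, HasDerivAt g (deriv f z / f z) z := fun z => hg z (Set.mem_univ z)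
  refine ⟨g, fun z => (hg' z).differentiableAt, fun z => ?_⟩
  have hD : ∀ z, HasDerivAt (fun z => f z * exp (-g z)) 0 z := by
    intro z
    have := (hf z).hasDerivAt.mul (hg' z).neg.cexp
    refine this.congr_deriv ?_
    have := h0 z
    field_simp
    ring
  have hc := is_const_of_deriv_eq_zero (fun z => (hD z).differentiableAt) (fun z => (hD z).deriv) z 0
  simp only [hg0, exp_neg, exp_log (h0 0), mul_inv_cancel₀ (h0 0)] at hc
  exact (mul_inv_eq_one₀ (exp_ne_zero _)).1 hc

lemma poly_of_re (g : ℂ → ℂ) (hg : Differentiable ℂ g) (C : ℝ) (N : ℕ)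
    (h : ∀ z, (g z).re ≤ C * (1 + ‖z‖) ^ N) : ∃ G : Polynomial ℂ, ∀ z, g z = G.eval z := by
  wlog hC : 0 < C generalizing C
  · refine this 1 (fun z => (h z).trans ?_) one_pos
    gcongr
    linarith
  have hbd : ∀ R : ℝ, 1 ≤ R → ∀ z ∈ Metric.sphere (0:ℂ) R,
      ‖g z‖ ≤ (2 * (C * 3 ^ N) + 3 * ‖g 0‖) * R ^ N := by
    intro R hR z hz
    have hz' : ‖z‖ = R := by simpa using hz
    have hR0 : 0 < R := by linarith
    have := Complex.borelCaratheodory (f := g) (M := C * (1 + 2 * R) ^ N) (R := 2 * R) (z := z)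
      (by positivity) hg.differentiableOn (by
        intro y hy
        have hy' : ‖y‖ < 2 * R := by simpa using hy
        refine (h y).trans ?_
        gcongr) (by linarith) (by simp [hz']; linarith)
    rw [hz'] at this
    have e1 : 2 * (C * (1 + 2 * R) ^ N) * R / (2 * R - R) = 2 * (C * (1 + 2 * R) ^ N) := by
      rw [show 2 * R - R = R by ring]; field_simp
    have e2 : ‖g 0‖ * (2 * R + R) / (2 * R - R) = 3 * ‖g 0‖ := by
      rw [show 2 * R - R = R by ring]; field_simp; ring
    rw [e1, e2] at this
    refine this.trans ?_
    have h3 : (1 + 2 * R) ^ N ≤ 3 ^ N * R ^ N := by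
      rw [← mul_pow]; gcongr; linarith
    have h4 : 1 ≤ R ^ N := one_le_pow₀ hR
    rw [add_mul]
    apply add_le_add
    · calc _ ≤ 2 * (C * (3 ^ N * R ^ N)) := by gcongr
        _ = _ := by ring
    · exact le_mul_of_one_le_right (by positivity) h4
  set A := 2 * (C * 3 ^ N) + 3 * ‖g 0‖
  have hz : ∀ n, N < n → iteratedDeriv n g 0 = 0 := by
    intro n hn
    have hb : ∀ R : ℝ, 1 ≤ R → ‖iteratedDeriv n g 0‖ ≤ n.factorial * A / R := by
      intro R hR
      have hR0 : 0 < R := by linarith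
      refine (Complex.norm_iteratedDeriv_le_of_forall_mem_sphere_norm_le n hR0
        hg.diffContOnCl (hbd R hR)).trans ?_
      rw [div_le_div_iff₀ (by positivity) hR0]
      have hA : 0 ≤ A := by positivity
      calc n.factorial * (A * R ^ N) * R = n.factorial * A * R ^ (N + 1) := by ring
        _ ≤ n.factorial * A * R ^ n := by gcongr <;> first | exact hR | omega
    have ht : Filter.Tendsto (fun R : ℝ => n.factorial * A / R) Filter.atTop (nhds 0) :=
      Filter.tendsto_id.const_div_atTop _
    have := ge_of_tendsto ht (Filter.eventually_atTop.2 ⟨1, hb⟩)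
    exact norm_le_zero_iff.1 this
  refine ⟨∑ n ∈ Finset.range (N + 1), Polynomial.C ((n.factorial : ℂ)⁻¹ * iteratedDeriv n g 0) * X ^ n,
    fun z => ?_⟩
  rw [← taylorSeries_eq_of_entire' (c := 0) z hg, tsum_eq_sum (s := Finset.range (N + 1))]
  · simp [eval_finsetSum]
  · intro n hn
    rw [hz n (by simp at hn; omega)]
    simp

lemma degree_contra (P Q H : Polynomial ℂ) (hP : Odd P.natDegree) (hQ : Q ≠ 0)
    (h : derivative (derivative Q) + 2 * derivative Q * H + Q * derivative H
      + Q * H ^ 2 + P * Q = 0) : False := by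
  have hne : (H ^ 2).natDegree ≠ P.natDegree := by
    rw [natDegree_pow]
    rintro e
    rw [← e] at hP
    exact (Nat.not_odd_iff_even.2 (even_two_mul _)) hP
  have hdeg : (H ^ 2 + P).natDegree = max (2 * H.natDegree) P.natDegree := by
    rw [← natDegree_pow]
    rcases lt_or_gt_of_ne hne with hl | hl
    · rw [natDegree_add_eq_right_of_natDegree_lt hl, max_eq_right hl.le]
    · rw [natDegree_add_eq_left_of_natDegree_lt hl, max_eq_left hl.le]
  have hpos := hP.pos
  have hne0 : H ^ 2 + P ≠ 0 := by
    intro e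
    rw [e, natDegree_zero] at hdeg
    omega
  have e : Q * (H ^ 2 + P) = -(derivative (derivative Q) + 2 * derivative Q * H + Q * derivative H) := by
    linear_combination h
  have h1 : (Q * (H ^ 2 + P)).natDegree = Q.natDegree + max (2 * H.natDegree) P.natDegree := by
    rw [natDegree_mul hQ hne0, hdeg]
  have d1 := natDegree_derivative_le Q
  have d2 := natDegree_derivative_le (derivative Q)
  have d3 := natDegree_derivative_le H
  have h2 : (Q * (H ^ 2 + P)).natDegree ≤ Q.natDegree + H.natDegree := by
    rw [e, natDegree_neg]
    refine natDegree_add_le_of_degree_le (natDegree_add_le_of_degree_le (by omega) ?_) ?_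
    · refine natDegree_mul_le.trans ?_
      have : (2 * derivative Q).natDegree ≤ Q.natDegree := by
        refine natDegree_mul_le.trans ?_
        have : (2 : ℂ[X]).natDegree = 0 := natDegree_ofNat 2
        omega
      omega
    · refine natDegree_mul_le.trans ?_
      omega
  omega

lemma infinite_zeros (P : Polynomial ℂ) (hP : Odd P.natDegree) (w : ℂ → ℂ)
    (hw : Differentiable ℂ w) (hw0 : w ≠ 0)
    (hd : ∀ z : ℂ, HasDerivAt (deriv w) (-(P.eval z * w z)) z) : {z : ℂ | w z = 0}.Infinite := by
  intro hfin
  obtain ⟨Q, hQ, f, hf, ⟨C, N, hg⟩, hf0, he⟩ := factor hfin.toFinset w hw (growth P w hw hd)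
    (by simp) (fun z h0 h1 => hw0 (uniq P w hw hd z h0 h1))
  obtain ⟨g, hgd, hge⟩ := exists_log f hf hf0
  obtain ⟨G, hG⟩ := poly_of_re g hgd C N (fun z => by
    have := hg z
    rw [hge, norm_exp] at this
    exact Real.exp_le_exp.1 this)
  have key : ∀ A : Polynomial ℂ, ∀ z, HasDerivAt (fun z => A.eval z * exp (G.eval z))
      ((derivative A + A * derivative G).eval z * exp (G.eval z)) z := by
    intro A z
    have := (A.hasDerivAt z).mul (G.hasDerivAt z).cexp
    refine this.congr_deriv ?_
    simp
    ring
  have hwe : w = fun z => Q.eval z * exp (G.eval z) := by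
    funext z; rw [he, hge, hG]
  have hw' : deriv w = fun z => (derivative Q + Q * derivative G).eval z * exp (G.eval z) := by
    funext z
    rw [hwe]
    exact (key Q z).deriv
  apply degree_contra P Q (derivative G) hP hQ
  apply Polynomial.funext
  intro z
  have h1 := hd z
  rw [hw'] at h1
  have h2 := h1.unique (key _ z)
  rw [hwe] at h2
  have h3 := exp_ne_zero (G.eval z)
  simp at h2
  simp
  apply mul_right_cancel₀ h3
  linear_combination -h2

lemma no_two (P : Polynomial ℂ) (w : ℂ → ℂ) (hw : Differentiable ℂ w) (hw0 : w ≠ 0)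
    (hd : ∀ z : ℂ, HasDerivAt (deriv w) (-(P.eval z * w z)) z) (p : Polynomial ℝ)
    (hp : ∀ x : ℝ, P.eval (x:ℂ) = (p.eval x : ℝ)) (a b : ℝ) (hab : a < b)
    (hneg : ∀ x ∈ Set.Icc a b, p.eval x ≤ 0) (ha : w a = 0) (hb : w b = 0) : False := by
  set ψ : ℝ → ℝ := fun t => (w t).re * (deriv w t).re + (w t).im * (deriv w t).im with hψ
  have re' : ∀ (f : ℂ → ℂ) (f' : ℂ) (t : ℝ), HasDerivAt f f' t →
      HasDerivAt (fun t : ℝ => (f t).re) f'.re t := fun f f' t h => h.real_of_complex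
  have im' : ∀ (f : ℂ → ℂ) (f' : ℂ) (t : ℝ), HasDerivAt f f' t →
      HasDerivAt (fun t : ℝ => (f t).im) f'.im t := fun f f' t h => by
    have := Complex.imCLM.hasFDerivAt.comp_hasDerivAt t h.comp_ofReal
    exact this
  have hD : ∀ t : ℝ, HasDerivAt ψ (normSq (deriv w t) - p.eval t * normSq (w t)) t := by
    intro t
    have h1 := (hw t).hasDerivAt
    have h2 := hd t
    have := ((re' _ _ _ h1).mul (re' _ _ _ h2)).add ((im' _ _ _ h1).mul (im' _ _ _ h2))
    refine this.congr_deriv ?_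
    rw [hp]
    simp [normSq_apply]
    ring
  have hmono : MonotoneOn ψ (Set.Icc a b) := by
    apply monotoneOn_of_hasDerivWithinAt_nonneg (convex_Icc a b)
      (fun t _ => (hD t).continuousAt.continuousWithinAt) (fun t _ => (hD t).hasDerivWithinAt)
    intro t ht
    have := hneg t (interior_subset ht)
    nlinarith [normSq_nonneg (deriv w t), normSq_nonneg (w t)]
  have hψa : ψ a = 0 := by simp [hψ, ha]
  have hψb : ψ b = 0 := by simp [hψ, hb]
  have hz : ∀ t ∈ Set.Icc a b, ψ t = 0 := by
    intro t ht
    have h1 := hmono (Set.left_mem_Icc.2 hab.le) ht ht.1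
    have h2 := hmono ht (Set.right_mem_Icc.2 hab.le) ht.2
    linarith
  have hin : Set.EqOn (fun t : ℝ => deriv w t) (fun _ => 0) (Set.Ioo a b) := by
    intro t ht
    have he : ψ =ᶠ[nhds t] fun _ => 0 := by
      filter_upwards [Icc_mem_nhds ht.1 ht.2] with y hy using hz y hy
    have h0 := (hD t).unique ((hasDerivAt_const t (0:ℝ)).congr_of_eventuallyEq he)
    have := hneg t ⟨ht.1.le, ht.2.le⟩
    have h1 : normSq (deriv w t) ≤ 0 := by nlinarith [normSq_nonneg (w t)]
    exact normSq_eq_zero.1 (le_antisymm h1 (normSq_nonneg _))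
  have hcl := hin.closure (hw.deriv.continuous.comp continuous_ofReal) continuous_const
  rw [closure_Ioo hab.ne] at hcl
  exact hw0 (uniq P w hw hd a ha (hcl (Set.left_mem_Icc.2 hab.le)))

end Stmt6

theorem stmt_6 (P : Polynomial ℂ) (hP : Odd P.natDegree)
    (hreal : ∀ n, (P.coeff n).im = 0)
    (w : ℂ → ℂ) (hw : Differentiable ℂ w) (hw0 : w ≠ 0)
    (hde : ∀ z : ℂ, iteratedDeriv 2 w z + P.eval z * w z = 0)
    (hzeros : {z : ℂ | w z = 0 ∧ z.im ≠ 0}.Finite) :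
    {z : ℂ | w z = 0}.Infinite ∧
      (BddAbove {x : ℝ | w x = 0} ∨ BddBelow {x : ℝ | w x = 0}) := by
  have hd := Stmt6.hasDeriv_deriv P w hw hde
  refine ⟨Stmt6.infinite_zeros P hP w hw hw0 hd, ?_⟩
  obtain ⟨p, hp⟩ : ∃ p : Polynomial ℝ, p.map ofRealHom = P := by
    have : P ∈ Polynomial.lifts ofRealHom := by
      rw [Polynomial.lifts_iff_coeff_lifts]
      intro n
      exact ⟨(P.coeff n).re, Complex.ext (by simp) (by simp [hreal n])⟩
    simpa [Polynomial.mem_lifts] using this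
  have hpe : ∀ x : ℝ, P.eval (x:ℂ) = (p.eval x : ℝ) := by
    intro x
    rw [← hp]
    simpa using Polynomial.eval_map_apply (f := ofRealHom) (p := p) x
  have hdeg : Odd p.natDegree := by
    rw [← hp, natDegree_map] at hP
    exact hP
  have hno := Stmt6.no_two P w hw hw0 hd p hpe
  rcases le_total p.leadingCoeff 0 with hl | hl
  · left
    have ht := p.tendsto_atBot_of_leadingCoeff_nonpos (natDegree_pos_iff_degree_pos.1 hdeg.pos) hl
    obtain ⟨x0, hx0⟩ := Filter.eventually_atTop.1 (ht.eventually_le_atBot 0)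
    by_cases h : ∃ x1, x0 ≤ x1 ∧ w (x1:ℝ) = 0
    · obtain ⟨x1, h1, h2⟩ := h
      refine ⟨x1, fun y hy => ?_⟩
      by_contra hlt
      push Not at hlt
      exact hno x1 y hlt (fun x hx => hx0 x (h1.trans hx.1)) h2 hy
    · push Not at h
      refine ⟨x0, fun y hy => ?_⟩
      by_contra hlt
      push Not at hlt
      exact h y hlt.le hy
  · right
    have hq : (p.comp (-X)).natDegree = p.natDegree := by simp [natDegree_comp]
    have hql : (p.comp (-X)).leadingCoeff ≤ 0 := by
      rw [leadingCoeff_comp (by simp)]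
      simp [hdeg.neg_one_pow, hl]
    have ht := (p.comp (-X)).tendsto_atBot_of_leadingCoeff_nonpos
      (natDegree_pos_iff_degree_pos.1 (hq ▸ hdeg.pos)) hql
    obtain ⟨x0, hx0⟩ := Filter.eventually_atTop.1 (ht.eventually_le_atBot 0)
    have hx0' : ∀ x ≤ -x0, p.eval x ≤ 0 := fun x hx => by
      simpa using hx0 (-x) (by linarith)
    by_cases h : ∃ x1, x1 ≤ -x0 ∧ w (x1:ℝ) = 0
    · obtain ⟨x1, h1, h2⟩ := h
      refine ⟨x1, fun y hy => ?_⟩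
      by_contra hlt
      push Not at hlt
      exact hno y x1 hlt (fun x hx => hx0' x (hx.2.trans h1)) hy h2
    · push Not at h
      refine ⟨-x0, fun y hy => ?_⟩
      by_contra hlt
      push Not at hlt
      exact h y hlt.le hy
end
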